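/- arXiv:2110.15947 — 3 statements merged into one kernel-verified Lean document; each statement's English description precedes it below -/
import Mathlib

section
/- (Theorem 3.2, solvability criterion for the inverse discrete transmission eigenvalue problem.) Let λ_1,…,λ_{2l−1} be complex numbers. Set R_0(λ) = α_l φ•_{l+1}(λ), R_1(λ) = φ•_l(λ), r_1 = ∏_{k=1}^{l−1} (α•_k)^{−1}, r_0 = (α_l/α•_l) r_1 (the leading coefficients of R_0 and R_1). Define E(λ) = (r_0 − r_1)·∏_{j=1}^{2l−1}(λ − λ_j); let v_0 (monic, degree l) and v_1 (monic, degree l−1) be the unique polynomials with E = R_0 v_1 − R_1 v_0; and let M_1,…,M_{2l−1} be the coefficients of the quotient of λ^{2l−1} v_1(λ) upon division by v_0(λ), written as quotient = Σ_{k=1}^{2l−1} M_k λ^{2l−1−k}. Then λ_1,…,λ_{2l−1} are the eigenvalues, counted with multiplicity, of the transmission problem for some complex numbers α_1,…,α_{l−1} (all nonzero, together with the given α_l) and β_1,…,β_l, if and only if the Hankel determinants Δ_n := det[M_{i+j−1}]_{i,j=1}^{n+1} are nonzero for all n = 1,…,l−1. -/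
open Polynomial

/-!
The matching condition says that `φ l * φs (l + 1) - φ (l + 1) * φs l` is a scalar multiple of
`E = R0 v1 - R1 v0`. As `R0` and `R1` are coprime and `α l` fixes the leading behaviour, this
happens exactly when `φ l` and `α l * φ (l + 1)` are the same scalar multiple of `v1` and `v0`. So
the question is whether `v1 / v0` is the `m`-function of a Jacobi matrix, that is, whether all
quotients of the Euclidean algorithm for `v0`, `v1` have degree one. These degrees are the gaps
between the consecutive normal indices of the Padé table of `v1 / v0` at infinity, and `n` is a
normal index if and only if the `n × n` Hankel determinant of the power series coefficients
of `v1 / v0` is nonzero.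
-/

section NormalIndex

variable {R : Type*} [CommRing R]

/-- `n` is a normal index of the rational function `v / u`: the `n`-th denominator of its Padé
approximation at infinity cannot have degree less than `n`. Multiplied out by `u`, this says that
no nonzero `p` of degree less than `n` has `p * v / u` equal to a polynomial `s` up to
`O(X ^ (-n - 1))`. -/
def IsNormalIndex (u v : R[X]) (n : ℕ) : Prop :=
  ∀ p s : R[X], p.degree < n → (p * v - s * u).degree + n < u.degree → p = 0

lemma degree_sub_add_lt {f g : R[X]} {a b : WithBot ℕ}
    (hf : f.degree + a < b) (hg : g.degree + a < b) : (f - g).degree + a < b :=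
  calc (f - g).degree + a ≤ max f.degree g.degree + a := by gcongr; exact degree_sub_le f g
    _ < b := by rw [← max_add_add_right]; exact max_lt hf hg

lemma degree_lt_natCast_add {f : R[X]} {a : WithBot ℕ} {m : ℕ} (h : f.degree + m < a) (n : ℕ) :
    f.degree < n + a :=
  calc f.degree ≤ f.degree + m := le_add_of_nonneg_right (by exact_mod_cast m.zero_le)
    _ < a := h
    _ ≤ n + a := le_add_of_nonneg_left (by exact_mod_cast n.zero_le)

lemma eq_zero_of_degree_mul_add_lt [IsDomain R] {p u : R[X]} {n : ℕ}
    (h : (p * u).degree + n < u.degree) : p = 0 := by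
  by_contra hp
  refine (degree_le_mul_left u hp).not_gt ?_
  simpa [mul_comm] using degree_lt_natCast_add h 0

lemma degree_lt_of_degree_sub_mul_lt [IsDomain R] {f s u : R[X]} {a : WithBot ℕ}
    (hf : f.degree < a + u.degree) (h : (f - s * u).degree < a + u.degree) : s.degree < a := by
  refine lt_of_add_lt_add_right (a := u.degree) ?_
  rw [← degree_mul, ← sub_sub_cancel f (s * u)]
  exact (degree_sub_le _ _).trans_lt (max_lt hf h)

lemma degree_mul_sub [IsDomain R] {q v w : R[X]} (hq : q ≠ 0) (hw : w.degree < v.degree) :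
    (q * v - w).degree = q.degree + v.degree := by
  rw [← degree_mul, degree_sub_eq_left_of_degree_lt]
  exact hw.trans_le ((degree_le_mul_left v hq).trans_eq (by rw [mul_comm]))

namespace IsNormalIndex

variable {u v w u' v' q : R[X]} {n : ℕ}

lemma zero (u v : R[X]) : IsNormalIndex u v 0 := fun _ _ hp _ =>
  degree_eq_bot.mp (Nat.WithBot.lt_zero_iff.mp hp)

variable [IsDomain R]

lemma C_mul_iff {a b : R} (ha : a ≠ 0) (hb : b ≠ 0) :
    IsNormalIndex (C a * u) (C b * v) n ↔ IsNormalIndex u v n := by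
  constructor <;> intro h p s hp hps
  · have heq : C a * p * (C b * v) - C b * s * (C a * u) = C (a * b) * (p * v - s * u) := by
      rw [C_mul]; ring
    simpa [ha] using h (C a * p) (C b * s) (by rwa [degree_C_mul ha])
      (by rwa [heq, degree_C_mul (mul_ne_zero ha hb), degree_C_mul ha])
  · have heq : C b * p * v - C a * s * u = p * (C b * v) - s * (C a * u) := by ring
    rw [← heq, degree_C_mul ha] at hps
    simpa [hb] using h (C b * p) (C a * s) (by rwa [degree_C_mul hb]) hps

/- The hypothesis on degrees says that `v / u` and `v' / u'` agree up to `O(X ^ (-2n))`. -/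
lemma of_degree_sub_add_le (h : IsNormalIndex u v n) (hu : u ≠ 0) (hu' : u' ≠ 0)
    (hdeg : (v' * u - v * u').degree + 2 * n ≤ u.degree + u'.degree) :
    IsNormalIndex u' v' n := by
  intro p s hp hps
  refine h p s hp (lt_of_add_lt_add_right (a := u'.degree) ?_)
  have hsplit : (p * v - s * u) * u' = (p * v' - s * u') * u - p * (v' * u - v * u') := by ring
  rw [add_right_comm, ← degree_mul, hsplit]
  apply degree_sub_add_lt
  · rw [degree_mul, add_right_comm, add_comm u.degree]
    exact WithBot.add_lt_add_right (degree_ne_bot.mpr hu) hps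
  · rcases eq_or_ne (v' * u - v * u') 0 with hzero | hne
    · simp [hzero, bot_lt_iff_ne_bot, hu, hu']
    · calc (p * (v' * u - v * u')).degree + n
          = p.degree + ((v' * u - v * u').degree + n) := by rw [degree_mul, add_assoc]
        _ < n + ((v' * u - v * u').degree + n) :=
          WithBot.add_lt_add_right (by simpa [WithBot.add_eq_bot] using hne) hp
        _ = (v' * u - v * u').degree + 2 * n := by ring
        _ ≤ u.degree + u'.degree := hdeg

lemma congr_of_degree_sub_add_le (hu : u ≠ 0) (hu' : u' ≠ 0)
    (hdeg : (v' * u - v * u').degree + 2 * n ≤ u.degree + u'.degree) :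
    IsNormalIndex u v n ↔ IsNormalIndex u' v' n :=
  ⟨fun h => h.of_degree_sub_add_le hu hu' hdeg, fun h => h.of_degree_sub_add_le hu' hu
    (by rwa [← neg_sub, degree_neg, add_comm _ u.degree])⟩

/- If `v / u = 1 / (q - w / v)`, then `s / p` approximates `v / u` exactly when `q - p / s`
approximates `w / v`. -/
lemma add_natDegree_iff (hq : q ≠ 0) (hw : w.degree < v.degree) (hu : u = q * v - w) :
    IsNormalIndex u v (n + q.natDegree) ↔ IsNormalIndex v w n := by
  have hv : v.degree ≠ ⊥ := (bot_le.trans_lt hw).ne'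
  have hqdeg : q.degree = q.natDegree := degree_eq_natDegree hq
  have hudeg : u.degree = q.degree + v.degree := hu ▸ degree_mul_sub hq hw
  have hshift (f : R[X]) :
      f.degree + ↑(n + q.natDegree) < u.degree ↔ f.degree + n < v.degree := by
    rw [hudeg, hqdeg, Nat.cast_add, ← add_assoc, add_comm (q.natDegree : WithBot ℕ) v.degree]
    exact WithBot.add_lt_add_iff_right (WithBot.natCast_ne_bot _)
  constructor
  · intro h s t hs hst
    have ht : t.degree < n := by
      refine degree_lt_of_degree_sub_mul_lt (f := s * w) ?_ (degree_lt_natCast_add hst n)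
      rw [degree_mul]
      exact (add_le_add_left hs.le _).trans_lt
        (WithBot.add_lt_add_left (WithBot.natCast_ne_bot n) hw)
    have hp : (s * q - t).degree < ↑(n + q.natDegree) := by
      refine (degree_sub_le _ _).trans_lt (max_lt ?_ (ht.trans_le ?_))
      · rw [degree_mul, hqdeg, Nat.cast_add]
        exact WithBot.add_lt_add_right (WithBot.natCast_ne_bot _) hs
      · exact_mod_cast n.le_add_right _
    have hsq : t = s * q := by
      refine (sub_eq_zero.mp (h _ s hp ((hshift _).mpr ?_))).symm
      rwa [show (s * q - t) * v - s * u = s * w - t * v by rw [hu]; ring]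
    refine eq_zero_of_degree_mul_add_lt (u := u) (n := n) ?_
    rw [show s * u = -(s * w - t * v) by rw [hu, hsq]; ring, degree_neg]
    rw [hudeg]
    exact hst.trans_le (le_add_of_nonneg_left (zero_le_degree_iff.mpr hq))
  · intro h p s hp hps
    have hs : s.degree < n := by
      refine degree_lt_of_degree_sub_mul_lt (f := p * v) ?_ (degree_lt_natCast_add hps n)
      rw [degree_mul, hudeg, ← add_assoc, hqdeg, ← Nat.cast_add]
      exact WithBot.add_lt_add_right hv hp
    rw [hshift] at hps
    obtain rfl : s = 0 := by
      refine h s (q * s - p) hs ?_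
      rwa [show s * w - (q * s - p) * v = p * v - s * u by rw [hu]; ring]
    exact eq_zero_of_degree_mul_add_lt (by simpa using hps)

lemma one_iff (hvu : v.degree < u.degree) : IsNormalIndex u v 1 ↔ u.degree = v.degree + 1 := by
  refine ⟨fun h => (Nat.WithBot.add_one_le_of_lt hvu).antisymm' ?_, fun heq p s hp hps => ?_⟩
  · by_contra! hlt
    exact one_ne_zero (h 1 0 (by simp) (by simpa using hlt))
  · have hpv : (p * v).degree ≤ v.degree := by
      rw [degree_mul]
      exact add_le_of_nonpos_left (Nat.WithBot.lt_one_iff_le_zero.mp hp)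
    obtain rfl : s = 0 := degree_eq_bot.mp <| Nat.WithBot.lt_zero_iff.mp <|
      degree_lt_of_degree_sub_mul_lt (f := p * v) (u := u) (by simpa using hpv.trans_lt hvu)
        (degree_lt_natCast_add hps 0)
    rw [zero_mul, sub_zero, heq, Nat.cast_one] at hps
    exact eq_zero_of_degree_mul_add_lt (n := 0) (by simpa using lt_of_add_lt_add_right hps)

end IsNormalIndex
end NormalIndex

section Jacobi

variable {K : Type*} [Field K]

/-- `φ` is the solution, with initial values `φ 0 = 0` and `φ 1 = 1`, of the three-term recurrence
with nonzero coefficients `α 1, …, α l` and diagonal coefficients `β 1, …, β l`. As in the discrete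
transmission problem, and unlike for a symmetric Jacobi matrix, the same `α n` multiplies both
neighbours of `φ n`. Values of `α`, `β` beyond `l` and of `φ` beyond `l + 1` are irrelevant. -/
structure IsJacobiSolution (l : ℕ) (α β : ℕ → K) (φ : ℕ → K[X]) : Prop where
  ne_zero : ∀ n, 1 ≤ n → n ≤ l → α n ≠ 0
  zero : φ 0 = 0
  one : φ 1 = 1
  recurrence : ∀ n, 1 ≤ n → n ≤ l →
    C (α n) * φ (n + 1) + C (β n) * φ n + C (α n) * φ (n - 1) = X * φ n

lemma recurrence_iff {a b : K} (ha : a ≠ 0) {f g h : K[X]} :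
    C a * h + C b * g + C a * f = X * g ↔ h = C a⁻¹ * (X - C b) * g - f := by
  have hinv : C a * C a⁻¹ = 1 := by rw [← C_mul, mul_inv_cancel₀ ha, C_1]
  constructor <;> intro heq
  · linear_combination C a⁻¹ * heq - (h + f) * hinv
  · linear_combination C a * heq + (X - C b) * g * hinv

lemma degree_C_inv_mul_X_sub_C {a : K} (ha : a ≠ 0) (b : K) :
    (C a⁻¹ * (X - C b)).degree = 1 := by
  rw [degree_C_mul (inv_ne_zero ha), degree_X_sub_C]

lemma exists_eq_C_inv_mul_X_sub_C {q : K[X]} (hq : q.degree = 1) :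
    ∃ a ≠ 0, ∃ b, q = C a⁻¹ * (X - C b) := by
  have hlead : q.coeff 1 ≠ 0 := coeff_ne_zero_of_eq_degree hq
  refine ⟨(q.coeff 1)⁻¹, inv_ne_zero hlead, -(q.coeff 0 / q.coeff 1), ?_⟩
  conv_lhs => rw [eq_X_add_C_of_degree_le_one hq.le]
  rw [inv_inv, mul_sub, ← C_mul, mul_neg, mul_div_cancel₀ _ hlead, C_neg, sub_neg_eq_add]

lemma isNormalIndex_succ_iff {u v w : K[X]} {a b : K} {n : ℕ} (ha : a ≠ 0)
    (hw : w.degree < v.degree) (hu : u = C a⁻¹ * (X - C b) * v - w) :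
    IsNormalIndex u v (n + 1) ↔ IsNormalIndex v w n := by
  have hdeg := degree_C_inv_mul_X_sub_C ha b
  have hnat : (C a⁻¹ * (X - C b)).natDegree = 1 := natDegree_eq_of_degree_eq_some hdeg
  rw [← IsNormalIndex.add_natDegree_iff (ne_zero_of_degree_gt (hdeg.trans_gt one_pos)) hw hu, hnat]

lemma IsNormalIndex.exists_eq_C_inv_mul_X_sub_C_mul_sub {u v : K[X]} (hvu : v.degree < u.degree)
    (h : IsNormalIndex u v 1) :
    ∃ a ≠ 0, ∃ b, ∃ w : K[X], w.degree < v.degree ∧ u = C a⁻¹ * (X - C b) * v - w := by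
  have hdeg : u.degree = v.degree + 1 := (one_iff hvu).mp h
  have hv : v ≠ 0 := by
    rintro rfl
    simp [hdeg] at hvu
  have hq : (u / v).degree = 1 :=
    WithBot.add_left_cancel (degree_ne_bot.mpr hv) ((degree_add_div hv hvu.le).trans hdeg)
  obtain ⟨a, ha, b, hab⟩ := exists_eq_C_inv_mul_X_sub_C hq
  refine ⟨a, ha, b, -(u % v), by rw [degree_neg]; exact degree_mod_lt u hv, ?_⟩
  rw [← hab, sub_neg_eq_add, mul_comm, EuclideanDomain.div_add_mod]

namespace IsJacobiSolution

variable {l n : ℕ} {α β : ℕ → K} {φ : ℕ → K[X]}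

lemma add_two (h : IsJacobiSolution l α β φ) (hn : n < l) :
    φ (n + 2) = C (α (n + 1))⁻¹ * (X - C (β (n + 1))) * φ (n + 1) - φ n :=
  (recurrence_iff (h.ne_zero (n + 1) (by omega) hn)).mp (h.recurrence (n + 1) (by omega) hn)

lemma degree_succ (h : IsJacobiSolution l α β φ) (hn : n ≤ l) : (φ (n + 1)).degree = n := by
  suffices (φ n).degree < (φ (n + 1)).degree ∧ (φ (n + 1)).degree = n from this.2
  induction n with
  | zero => simp [h.zero, h.one]
  | succ n ih =>
    obtain ⟨hlt, hdeg⟩ := ih (by omega)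
    have hq := degree_C_inv_mul_X_sub_C (h.ne_zero (n + 1) (by omega) hn) (β (n + 1))
    have hsucc : (φ (n + 2)).degree = ↑(n + 1) := by
      rw [h.add_two hn, degree_mul_sub (ne_zero_of_degree_gt (hq.trans_gt one_pos)) hlt, hq, hdeg]
      norm_cast
      exact add_comm 1 n
    exact ⟨by rw [hsucc, hdeg]; exact_mod_cast n.lt_succ_self, hsucc⟩

lemma degree_lt (h : IsJacobiSolution l α β φ) (hn : n ≤ l + 1) : (φ n).degree < n := by
  cases n with
  | zero => simp [h.zero]
  | succ n => rw [h.degree_succ (by omega)]; exact_mod_cast n.lt_succ_self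

lemma degree_C_mul_sub_X_mul_lt_iff (h : IsJacobiSolution l α β φ) (hn : 1 ≤ n) (hnl : n ≤ l)
    {a : K} : (C a * φ (n + 1) - X * φ n).degree < (n : WithBot ℕ) ↔ a = α n := by
  have hlower : (C (β n) * φ n + C (α n) * φ (n - 1)).degree < n := by
    refine (degree_add_le _ _).trans_lt (max_lt ?_ ?_)
    · rw [C_mul']
      exact (degree_smul_le _ _).trans_lt (h.degree_lt (by omega))
    · rw [C_mul']
      refine (degree_smul_le _ _).trans_lt ((h.degree_lt (by omega)).trans_le ?_)
      exact_mod_cast n.sub_le 1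
  have hsplit : C a * φ (n + 1) - X * φ n =
      C (a - α n) * φ (n + 1) - (C (β n) * φ n + C (α n) * φ (n - 1)) := by
    rw [← h.recurrence n hn hnl, C_sub]; ring
  rw [hsplit]
  constructor
  · intro hlt
    by_contra hne
    have hlead : (C (a - α n) * φ (n + 1)).degree = n := by
      rw [degree_C_mul (sub_ne_zero.mpr hne), h.degree_succ hnl]
    rw [degree_sub_eq_left_of_degree_lt (hlower.trans_eq hlead.symm), hlead] at hlt
    exact hlt.false
  · rintro rfl
    rw [sub_self, C_0, zero_mul, zero_sub, degree_neg]
    exact hlower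

lemma isCoprime (h : IsJacobiSolution l α β φ) (hn : n ≤ l) : IsCoprime (φ (n + 1)) (φ n) := by
  induction n with
  | zero => rw [zero_add, h.one]; exact isCoprime_one_left
  | succ n ih =>
    rw [h.add_two hn, sub_eq_neg_add, IsCoprime.add_mul_right_left_iff, IsCoprime.neg_left_iff]
    exact (ih (by omega)).symm

lemma isNormalIndex (h : IsJacobiSolution l α β φ) (hn : n ≤ l) {k : ℕ} (hk : k ≤ n) :
    IsNormalIndex (φ (n + 1)) (φ n) k := by
  induction n generalizing k with
  | zero =>
    obtain rfl := Nat.le_zero.mp hk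
    exact IsNormalIndex.zero _ _
  | succ n ih =>
    cases k with
    | zero => exact IsNormalIndex.zero _ _
    | succ k =>
      rw [isNormalIndex_succ_iff (h.ne_zero (n + 1) (by omega) hn) ?_ (h.add_two hn)]
      · exact ih (by omega) (by omega)
      · exact (h.degree_lt (by omega)).trans_eq (h.degree_succ (by omega)).symm

lemma extend (h : IsJacobiSolution l α β φ) {a : K} (ha : a ≠ 0) (b : K) :
    IsJacobiSolution (l + 1) (Function.update α (l + 1) a) (Function.update β (l + 1) b)
      (Function.update φ (l + 2) (C a⁻¹ * (X - C b) * φ (l + 1) - φ l)) := by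
  have hφ (n : ℕ) (hn : n ≤ l + 1) :
      Function.update φ (l + 2) (C a⁻¹ * (X - C b) * φ (l + 1) - φ l) n = φ n := by
    rw [Function.update_of_ne (by omega)]
  constructor
  · intro n hn hnl
    rcases eq_or_ne n (l + 1) with rfl | hne
    · simpa
    · rw [Function.update_of_ne hne]; exact h.ne_zero n hn (by omega)
  · rw [hφ 0 (by omega), h.zero]
  · rw [hφ 1 (by omega), h.one]
  · intro n hn hnl
    rw [hφ n hnl, hφ (n - 1) (by omega)]
    rcases eq_or_ne n (l + 1) with rfl | hne
    · simpa using (recurrence_iff ha).mpr rfl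
    · rw [hφ (n + 1) (by omega), Function.update_of_ne hne, Function.update_of_ne hne]
      exact h.recurrence n hn (by omega)

end IsJacobiSolution

/- Each step of the Euclidean algorithm for `u`, `v` has a quotient of degree one, which is
`(X - β) / α` for the next pair of Jacobi coefficients. -/
lemma exists_isJacobiSolution_of_isNormalIndex {l : ℕ} {u v : K[X]} (hu : u.degree = l)
    (hv : v.degree < l) (h : ∀ n ≤ l, IsNormalIndex u v n) :
    ∃ α β φ, IsJacobiSolution l α β φ ∧ ∃ a ≠ 0, φ l = C a * v ∧ φ (l + 1) = C a * u := by
  induction l generalizing u v with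
  | zero =>
    obtain ⟨c, rfl⟩ : ∃ c, u = C c := ⟨_, eq_C_of_degree_eq_zero hu⟩
    obtain rfl : v = 0 := degree_eq_bot.mp (Nat.WithBot.lt_zero_iff.mp hv)
    have hc : c ≠ 0 := by rintro rfl; simp at hu
    refine ⟨0, 0, Pi.single 1 1, ⟨by omega, by simp, by simp, by omega⟩,
      c⁻¹, inv_ne_zero hc, by simp, ?_⟩
    rw [zero_add, Pi.single_eq_same, ← C_mul, inv_mul_cancel₀ hc, C_1]
  | succ l ih =>
    have hvu : v.degree < u.degree := hv.trans_eq hu.symm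
    have hnormal : IsNormalIndex u v 1 := h 1 (by omega)
    have hvdeg : v.degree = l := WithBot.add_right_cancel (WithBot.natCast_ne_bot 1) <| by
      rw [Nat.cast_one, ← (IsNormalIndex.one_iff hvu).mp hnormal, hu, Nat.cast_succ]
    obtain ⟨c, hc, b, w, hw, heq⟩ := hnormal.exists_eq_C_inv_mul_X_sub_C_mul_sub hvu
    obtain ⟨α, β, φ, hφ, a, ha, hφl, hφl'⟩ := ih hvdeg (hw.trans_eq hvdeg) fun n hn =>
      (isNormalIndex_succ_iff hc hw heq).mp (h (n + 1) (by omega))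
    refine ⟨_, _, _, hφ.extend hc b, a, ha, ?_, ?_⟩
    · rw [Function.update_of_ne (by omega), hφl']
    · rw [Function.update_self, hφl, hφl', heq]
      ring

end Jacobi

section Hankel

variable {R : Type*} [CommRing R] {n N : ℕ}

lemma degree_add_natCast_lt_iff {f : R[X]} (hn : n ≤ N) :
    f.degree + (n : WithBot ℕ) < N ↔ ∀ m, N ≤ m + n → f.coeff m = 0 := by
  conv_lhs => rw [← Nat.sub_add_cancel hn, Nat.cast_add]
  rw [WithBot.add_lt_add_iff_right (WithBot.natCast_ne_bot n), degree_lt_iff_coeff_zero]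
  simp only [Nat.sub_le_iff_le_add]

lemma exists_degree_sub_mul_X_pow_add_lt_iff (hn : n ≤ N) (f : R[X]) :
    (∃ s : R[X], (f - s * X ^ N).degree + (n : WithBot ℕ) < N) ↔
      ∀ i < n, f.coeff (N - (i + 1)) = 0 := by
  nontriviality R
  have hcoeff (s : R[X]) {m : ℕ} (hm : m < N) : (f - s * X ^ N).coeff m = f.coeff m := by
    rw [coeff_sub, coeff_mul_X_pow', if_neg hm.not_ge, sub_zero]
  simp only [degree_add_natCast_lt_iff hn]
  constructor
  · rintro ⟨s, hs⟩ i hi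
    rw [← hcoeff s (by omega)]
    exact hs _ (by omega)
  · refine fun h => ⟨f /ₘ X ^ N, fun m hm => ?_⟩
    rcases lt_or_ge m N with hlt | hge
    · rw [hcoeff _ hlt, show m = N - (N - (m + 1) + 1) by omega]
      exact h _ (by omega)
    · have hmod : (f - f /ₘ X ^ N * X ^ N).degree < (N : WithBot ℕ) := by
        rw [mul_comm, ← modByMonic_eq_sub_mul_div, ← degree_X_pow (R := R) N]
        exact degree_modByMonic_lt f (monic_X_pow N)
      exact coeff_eq_zero_of_degree_lt (hmod.trans_le (by exact_mod_cast hge))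

lemma coeff_mul_eq_hankel_mulVec (hn : 2 * n ≤ N + 1) {p : R[X]} (hp : p.degree < n) (Q : R[X])
    (i : Fin n) : (p * Q).coeff (N - (i + 1)) =
      (Matrix.of fun i j : Fin n => Q.coeff (N - (i + j + 1))).mulVec (fun j => p.coeff j) i := by
  conv_lhs => rw [← sum_C_mul_X_pow_eq p, ← sum_fin _ (by simp) hp]
  rw [Finset.sum_mul, finsetSum_coeff, Matrix.mulVec, dotProduct]
  refine Finset.sum_congr rfl fun j _ => ?_
  have hij : N - (i + 1) = N - (i + j + 1) + j := by omega
  rw [mul_assoc, coeff_C_mul, hij, coeff_X_pow_mul, mul_comm, Matrix.of_apply]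

lemma isNormalIndex_X_pow_iff_det_ne_zero [IsDomain R] (hn : 2 * n ≤ N + 1) (Q : R[X]) :
    IsNormalIndex (X ^ N) Q n ↔
      (Matrix.of fun i j : Fin n => Q.coeff (N - (i + j + 1))).det ≠ 0 := by
  classical
  have hvanish (p : R[X]) (hp : p.degree < n) :
      (∃ s : R[X], (p * Q - s * X ^ N).degree + (n : WithBot ℕ) < (X ^ N : R[X]).degree) ↔
        (Matrix.of fun i j : Fin n => Q.coeff (N - (i + j + 1))).mulVec
          (fun j => p.coeff j) = 0 := by
    rw [degree_X_pow, exists_degree_sub_mul_X_pow_add_lt_iff (by omega), funext_iff,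
      ← Fin.forall_iff (p := fun i => (p * Q).coeff (N - (i + 1)) = 0)]
    simp only [coeff_mul_eq_hankel_mulVec hn hp Q, Pi.zero_apply]
  constructor
  · intro h hdet
    obtain ⟨c, hc, hmul⟩ := Matrix.exists_mulVec_eq_zero_iff.mpr hdet
    have hcoeff : (fun j : Fin n => (ofFn n c).coeff j) = c :=
      funext fun j => ofFn_coeff_eq_val_of_lt c j.2
    obtain ⟨s, hs⟩ := (hvanish (ofFn n c) (ofFn_degree_lt c)).mpr (by rwa [hcoeff])
    refine hc ?_
    rw [← hcoeff, h _ s (ofFn_degree_lt c) hs]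
    rfl
  · intro hdet p s hp hps
    have hcoeff := Matrix.eq_zero_of_mulVec_eq_zero hdet ((hvanish p hp).mp ⟨s, hps⟩)
    ext m
    rcases lt_or_ge m n with hlt | hge
    · exact congrFun hcoeff ⟨m, hlt⟩
    · exact coeff_eq_zero_of_degree_lt (hp.trans_le (by exact_mod_cast hge))

lemma coeff_sum_C_mul_X_pow_sub (M : ℕ → R) {k : ℕ} (hk : k ∈ Finset.Icc 1 N) :
    (∑ k ∈ Finset.Icc 1 N, C (M k) * X ^ (N - k)).coeff (N - k) = M k := by
  rw [finsetSum_coeff, Finset.sum_eq_single_of_mem k hk]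
  · simp
  · intro j hj hne
    rw [Finset.mem_Icc] at hj hk
    rw [coeff_C_mul_X_pow, if_neg (by omega)]

lemma isNormalIndex_X_pow_divByMonic_iff [IsDomain R] {u : R[X]} (hu : u.Monic) (v : R[X])
    (hn : 2 * n ≤ N + 1) :
    IsNormalIndex (X ^ N) ((X ^ N * v) /ₘ u) n ↔ IsNormalIndex u v n := by
  refine (IsNormalIndex.congr_of_degree_sub_add_le hu.ne_zero (pow_ne_zero N X_ne_zero) ?_).symm
  have hmod : (X ^ N * v) /ₘ u * u - v * X ^ N = -((X ^ N * v) %ₘ u) := by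
    rw [modByMonic_eq_sub_mul_div]; ring
  rw [hmod, degree_neg, degree_X_pow]
  calc ((X ^ N * v) %ₘ u).degree + 2 * n
      ≤ ((X ^ N * v) %ₘ u).degree + (1 + N) := by
        gcongr; exact_mod_cast hn.trans_eq (add_comm N 1)
    _ = (((X ^ N * v) %ₘ u).degree + 1) + N := (add_assoc _ _ _).symm
    _ ≤ u.degree + N := by
        gcongr; exact Nat.WithBot.add_one_le_of_lt (degree_modByMonic_lt _ hu)

lemma isNormalIndex_iff_det_hankel_ne_zero [IsDomain R] {u v : R[X]} (hu : u.Monic) {M : ℕ → R}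
    (hM : (X ^ N * v) /ₘ u = ∑ k ∈ Finset.Icc 1 N, C (M k) * X ^ (N - k)) (hn : 2 * n ≤ N + 1) :
    IsNormalIndex u v n ↔ (Matrix.of fun i j : Fin n => M (i + j + 1)).det ≠ 0 := by
  rw [← isNormalIndex_X_pow_divByMonic_iff hu v hn, isNormalIndex_X_pow_iff_det_ne_zero hn, hM]
  have hentry (i j : Fin n) : (i : ℕ) + j + 1 ∈ Finset.Icc 1 N := by
    rw [Finset.mem_Icc]; omega
  simp only [coeff_sum_C_mul_X_pow_sub M (hentry _ _)]

end Hankel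

section Transmission

lemma eq_zero_of_isCoprime_of_degree_lt {R : Type*} [CommRing R] [IsDomain R]
    {f g a b q : R[X]} (hfg : IsCoprime f g) (h : f * a = g * b)
    (hdeg : (b - q * a).degree < (f - q * g).degree) : a = 0 ∧ b = 0 := by
  obtain ⟨x, y, hxy⟩ := hfg
  have ha : a = (x * b + y * a) * g := by linear_combination (-a) * hxy + x * h
  have hb : b = (x * b + y * a) * f := by linear_combination (-b) * hxy - y * h
  have hmul : b - q * a = (x * b + y * a) * (f - q * g) := by linear_combination hb - q * ha
  have hzero : x * b + y * a = 0 := by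
    by_contra hne
    rw [hmul, mul_comm] at hdeg
    exact (degree_le_mul_left _ hne).not_gt hdeg
  exact ⟨by rw [ha, hzero, zero_mul], by rw [hb, hzero, zero_mul]⟩

variable {K : Type*} [Field K] {l : ℕ}

lemma IsJacobiSolution.exists_sub_eq_C_mul_iff {αs βs α β : ℕ → K} {φs φ : ℕ → K[X]}
    (hs : IsJacobiSolution l αs βs φs) (h : IsJacobiSolution l α β φ) (hl : 1 ≤ l)
    (hα : α l ≠ αs l) {v₀ v₁ P : K[X]} (hv : (v₀ - X * v₁).degree < (l : WithBot ℕ))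
    (hP : P = C (α l) * φs (l + 1) * v₁ - φs l * v₀) :
    (∃ c, c ≠ 0 ∧ φ l * φs (l + 1) - φ (l + 1) * φs l = C c * P) ↔
      ∃ a, a ≠ 0 ∧ φ l = C a * v₁ ∧ φ (l + 1) = C a * (C (α l)⁻¹ * v₀) := by
  have hαl : α l ≠ 0 := h.ne_zero l hl le_rfl
  have hinv : C (α l) * C (α l)⁻¹ = 1 := by rw [← C_mul, mul_inv_cancel₀ hαl, C_1]
  constructor
  · rintro ⟨c, hc, hD⟩
    have hcoprime : IsCoprime (C (α l) * φs (l + 1)) (φs l) :=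
      (isCoprime_mul_unit_left_left (isUnit_C.mpr hαl.isUnit) _ _).mpr (hs.isCoprime le_rfl)
    have hdeg : (C (α l) * φ (l + 1) - C (α l * c) * v₀ -
        X * (φ l - C (α l * c) * v₁)).degree < (l : WithBot ℕ) := by
      rw [show C (α l) * φ (l + 1) - C (α l * c) * v₀ - X * (φ l - C (α l * c) * v₁) =
        (C (α l) * φ (l + 1) - X * φ l) - C (α l * c) * (v₀ - X * v₁) by ring]
      refine (degree_sub_le _ _).trans_lt (max_lt ?_ ?_)
      · exact (h.degree_C_mul_sub_X_mul_lt_iff hl le_rfl).mpr rfl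
      · rwa [degree_C_mul (mul_ne_zero hαl hc)]
    obtain ⟨hφl, hφl'⟩ := eq_zero_of_isCoprime_of_degree_lt hcoprime
      (by rw [C_mul]; linear_combination C (α l) * hD + C (α l) * C c * hP)
      (hdeg.trans_le (not_lt.mp (mt (hs.degree_C_mul_sub_X_mul_lt_iff hl le_rfl).mp hα)))
    refine ⟨α l * c, mul_ne_zero hαl hc, sub_eq_zero.mp hφl, ?_⟩
    linear_combination C (α l)⁻¹ * hφl' - φ (l + 1) * hinv
  · rintro ⟨a, ha, hφl, hφl'⟩
    refine ⟨a * (α l)⁻¹, mul_ne_zero ha (inv_ne_zero hαl), ?_⟩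
    rw [hφl, hφl', hP, C_mul]
    linear_combination -C a * v₁ * φs (l + 1) * hinv

lemma exists_eq_C_mul_C_mul_iff {r : K} (hr : r ≠ 0) {f g : K[X]} :
    (∃ c, c ≠ 0 ∧ f = C c * (C r * g)) ↔ ∃ c, c ≠ 0 ∧ f = C c * g := by
  constructor
  · rintro ⟨c, hc, rfl⟩
    exact ⟨c * r, mul_ne_zero hc hr, by rw [C_mul, mul_assoc]⟩
  · rintro ⟨c, hc, rfl⟩
    exact ⟨c / r, div_ne_zero hc hr, by rw [← mul_assoc, ← C_mul, div_mul_cancel₀ c hr]⟩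

lemma exists_isJacobiSolution_iff_isNormalIndex (hl : 1 ≤ l) {a : K} (ha : a ≠ 0)
    {v₀ v₁ : K[X]} (hv₀ : v₀.degree = l) (hv₁ : v₁.degree < l)
    (hv : (v₀ - X * v₁).degree < (l : WithBot ℕ)) :
    (∃ α β φ, IsJacobiSolution l α β φ ∧ α l = a ∧
      ∃ b, b ≠ 0 ∧ φ l = C b * v₁ ∧ φ (l + 1) = C b * (C a⁻¹ * v₀)) ↔
      ∀ n ≤ l, IsNormalIndex v₀ v₁ n := by
  have hscale (b : K) (hb : b ≠ 0) (n : ℕ) :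
      IsNormalIndex (C b * (C a⁻¹ * v₀)) (C b * v₁) n ↔ IsNormalIndex v₀ v₁ n := by
    rw [IsNormalIndex.C_mul_iff hb hb]
    simpa using IsNormalIndex.C_mul_iff (inv_ne_zero ha) (one_ne_zero (α := K)) (v := v₁)
  constructor
  · rintro ⟨α, β, φ, hφ, -, b, hb, hφl, hφl'⟩ n hn
    rw [← hscale b hb, ← hφl, ← hφl']
    exact hφ.isNormalIndex le_rfl hn
  · intro h
    obtain ⟨α, β, φ, hφ, b, hb, hφl, hφl'⟩ := exists_isJacobiSolution_of_isNormalIndex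
      (u := C a⁻¹ * v₀) (by rwa [degree_C_mul (inv_ne_zero ha)]) hv₁ fun n hn =>
        (IsNormalIndex.C_mul_iff one_ne_zero one_ne_zero).mp ((hscale 1 one_ne_zero n).mpr (h n hn))
    have hsub : C a * φ (l + 1) - X * φ l = C b * (v₀ - X * v₁) := by
      have hinv : C a * C a⁻¹ = 1 := by rw [← C_mul, mul_inv_cancel₀ ha, C_1]
      rw [hφl, hφl']
      linear_combination C b * v₀ * hinv
    refine ⟨α, β, φ, hφ, ?_, b, hb, hφl, hφl'⟩
    rw [eq_comm, ← hφ.degree_C_mul_sub_X_mul_lt_iff hl le_rfl, hsub, degree_C_mul hb]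
    exact hv

theorem transmission_inverse_problem_criterion_general (hl : 1 ≤ l)
    {αs βs : ℕ → K} {φs : ℕ → K[X]} (hs : IsJacobiSolution l αs βs φs)
    {αl : K} (hαl : αl ≠ 0) (hαlne : αl ≠ αs l) {v₀ v₁ E : K[X]}
    (hv₀m : v₀.Monic) (hv₀d : v₀.degree = l) (hv₁m : v₁.Monic) (hv₁d : v₁.degree = (l - 1 : ℕ))
    (hE : E = C αl * φs (l + 1) * v₁ - φs l * v₀) {M : ℕ → K}
    (hM : (X ^ (2 * l - 1) * v₁) /ₘ v₀ =
      ∑ k ∈ Finset.Icc 1 (2 * l - 1), C (M k) * X ^ (2 * l - 1 - k)) :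
    (∃ α β φ, IsJacobiSolution l α β φ ∧ α l = αl ∧
      ∃ c, c ≠ 0 ∧ φ l * φs (l + 1) - φ (l + 1) * φs l = C c * E) ↔
    ∀ n, 1 ≤ n → n ≤ l - 1 →
      (Matrix.of fun i j : Fin (n + 1) => M (i + j + 1)).det ≠ 0 := by
  have hdeg : v₀.degree = v₁.degree + 1 := by
    rw [hv₀d, hv₁d]
    exact_mod_cast (Nat.sub_add_cancel hl).symm
  have hv₁lt : v₁.degree < v₀.degree := by
    rw [hv₀d, hv₁d]
    exact_mod_cast Nat.sub_one_lt_of_le hl le_rfl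
  have hv : (v₀ - X * v₁).degree < (l : WithBot ℕ) := by
    rw [← hv₀d]
    refine degree_sub_lt_left ?_ hv₀m.ne_zero (by rw [hv₀m, monic_X.mul hv₁m])
    rw [degree_mul, degree_X, add_comm, hdeg]
  calc _ ↔ ∃ α β φ, IsJacobiSolution l α β φ ∧ α l = αl ∧
        ∃ b, b ≠ 0 ∧ φ l = C b * v₁ ∧ φ (l + 1) = C b * (C αl⁻¹ * v₀) := by
        refine exists_congr fun α => exists_congr fun β => exists_congr fun φ =>
          and_congr_right fun hφ => and_congr_right ?_
        rintro rfl
        exact hs.exists_sub_eq_C_mul_iff hφ hl hαlne hv hE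
    _ ↔ ∀ n ≤ l, IsNormalIndex v₀ v₁ n :=
        exists_isJacobiSolution_iff_isNormalIndex hl hαl hv₀d (hv₁lt.trans_eq hv₀d) hv
    _ ↔ ∀ n, 1 ≤ n → n ≤ l - 1 → IsNormalIndex v₀ v₁ (n + 1) := by
        refine ⟨fun h n _ hn => h (n + 1) (by omega), fun h n hn => ?_⟩
        match n with
        | 0 => exact IsNormalIndex.zero v₀ v₁
        | 1 => exact (IsNormalIndex.one_iff hv₁lt).mpr hdeg
        | n + 2 => exact h (n + 1) (by omega) (by omega)
    _ ↔ _ := forall₃_congr fun n _ hn =>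
        isNormalIndex_iff_det_hankel_ne_zero hv₀m hM (by omega)

end Transmission

/-- Theorem 3.2: solvability criterion for the inverse discrete transmission eigenvalue
problem. Given the data `α• n`, `β• n` (`n = 1,…,l`) and `α l` (with `α l ≠ 0`,
`α l ≠ α• l`), set `R0 = α_l φ• (l+1)`, `R1 = φ• l`, `r1 = ∏_{k=1}^{l-1} (α• k)⁻¹`,
`r0 = (α_l / α• l) r1`. Given complex numbers `Λ 1, …, Λ (2l-1)`, construct
`E = (r0 - r1) ∏ (X - Λ j)`, the unique monic `v0`, `v1` of degrees `l`, `l-1` with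
`E = R0 v1 - R1 v0`, and `M k` as the coefficients of the quotient of `X^{2l-1} v1`
divided by `v0`. Then `Λ 1, …, Λ (2l-1)` are the eigenvalues (with multiplicity) of the
transmission problem for some nonzero `α 1, …, α (l-1)` (together with the given `α l`)
and some `β 1, …, β l`, if and only if the Hankel determinants `Δ_n`, `n = 1,…,l-1`,
are nonzero. -/
theorem transmission_inverse_problem_criterion (l : ℕ) (hl : 1 ≤ l)
    (αs βs : ℕ → ℂ) (hαs : ∀ n, 1 ≤ n → n ≤ l → αs n ≠ 0)
    (αl : ℂ) (hαl : αl ≠ 0) (hαlne : αl ≠ αs l)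
    (φs : ℕ → Polynomial ℂ) (hφs0 : φs 0 = 0) (hφs1 : φs 1 = 1)
    (hrecs : ∀ n, 1 ≤ n → n ≤ l →
      C (αs n) * φs (n + 1) + C (βs n) * φs n + C (αs n) * φs (n - 1) = X * φs n)
    (Λ : ℕ → ℂ) (r0 r1 : ℂ)
    (hr1 : r1 = ∏ k ∈ Finset.Icc 1 (l - 1), (αs k)⁻¹)
    (hr0 : r0 = αl / αs l * r1)
    (E : Polynomial ℂ)
    (hE : E = C (r0 - r1) * ∏ j ∈ Finset.Icc 1 (2 * l - 1), (X - C (Λ j)))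
    (v0 v1 : Polynomial ℂ)
    (hv0m : v0.Monic) (hv0d : v0.degree = (l : WithBot ℕ))
    (hv1m : v1.Monic) (hv1d : v1.degree = ((l - 1 : ℕ) : WithBot ℕ))
    (hEv : E = (C αl * φs (l + 1)) * v1 - φs l * v0)
    (M : ℕ → ℂ)
    (hM : (X ^ (2 * l - 1) * v1) /ₘ v0
      = ∑ k ∈ Finset.Icc 1 (2 * l - 1), C (M k) * X ^ (2 * l - 1 - k)) :
    (∃ α β : ℕ → ℂ, (∀ n, 1 ≤ n → n ≤ l → α n ≠ 0) ∧ α l = αl ∧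
      ∃ φ : ℕ → Polynomial ℂ, φ 0 = 0 ∧ φ 1 = 1 ∧
        (∀ n, 1 ≤ n → n ≤ l →
          C (α n) * φ (n + 1) + C (β n) * φ n + C (α n) * φ (n - 1) = X * φ n) ∧
        ∃ c : ℂ, c ≠ 0 ∧
          φ l * φs (l + 1) - φ (l + 1) * φs l
            = C c * ∏ j ∈ Finset.Icc 1 (2 * l - 1), (X - C (Λ j))) ↔
    (∀ n, 1 ≤ n → n ≤ l - 1 →
      Matrix.det (Matrix.of fun i j : Fin (n + 1) => M ((i : ℕ) + (j : ℕ) + 1)) ≠ 0) := by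
  have hr1ne : r1 ≠ 0 := hr1 ▸ Finset.prod_ne_zero_iff.mpr fun k hk =>
    inv_ne_zero (hαs k (Finset.mem_Icc.mp hk).1 (by have := (Finset.mem_Icc.mp hk).2; omega))
  have hr : r0 - r1 ≠ 0 := by
    rw [hr0, ← sub_one_mul]
    exact mul_ne_zero (sub_ne_zero.mpr (mt (div_eq_one_iff_eq (hαs l hl le_rfl)).mp hαlne)) hr1ne
  rw [← transmission_inverse_problem_criterion_general hl ⟨hαs, hφs0, hφs1, hrecs⟩ hαl hαlne
    hv0m hv0d hv1m hv1d hEv hM, hE]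
  simp only [exists_eq_C_mul_C_mul_iff hr]
  constructor
  · rintro ⟨α, β, hα, hαl, φ, hφ0, hφ1, hrec, hD⟩
    exact ⟨α, β, φ, ⟨hα, hφ0, hφ1, hrec⟩, hαl, hD⟩
  · rintro ⟨α, β, φ, ⟨hα, hφ0, hφ1, hrec⟩, hαl, hD⟩
    exact ⟨α, β, hα, hαl, φ, hφ0, hφ1, hrec, hD⟩
end

section
/- (Theorem 3.3, local solvability and stability for the inverse problem with polynomials in the boundary condition.) Let R_0 = Σ_{n=0}^{l} r_{n,0} λ^n and R_1 = Σ_{n=0}^{l−1} r_{n,1} λ^n be fixed relatively prime polynomials with r_{l,0} ≠ 0, r_{l−1,1} ≠ 0 and r_{l,0} ≠ r_{l−1,1}; let a_1,…,a_l, b_1,…,b_l be fixed with a_n ≠ 0 for n = 1,…,l−1 and a_l = 1, and let λ_1,…,λ_{2l−1} be the eigenvalues of the corresponding problem. Then there exist ε > 0 and C > 0, depending only on R_0, R_1, {a_n}, {b_n}, such that for any complex numbers λ̃_1,…,λ̃_{2l−1} and any polynomials R̃_0 = Σ_{n=0}^{l} r̃_{n,0} λ^n, R̃_1 = Σ_{n=0}^{l−1}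 r̃_{n,1} λ^n satisfying δ := max_{1 ≤ j ≤ 2l−1} |λ_j − λ̃_j| + max_{n, j∈{0,1}} |r_{n,j} − r̃_{n,j}| ≤ ε, there exist unique complex numbers ã_1,…,ã_l, b̃_1,…,b̃_l with ã_n ≠ 0 for n = 1,…,l−1 and ã_l = 1, such that λ̃_1,…,λ̃_{2l−1} are the eigenvalues (zeros with multiplicity of R̃_0 ṽ_1 − R̃_1 ṽ_0, where [ṽ_n] solves the difference equation with coefficients (ã_n, b̃_n) and ṽ_{l+1} = 0, ṽ_l = 1) of the perturbed problem; moreover |a_n − ã_n| ≤ Cδ and |b_n − b̃_n| ≤ Cδ for n = 1,…,l. -/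
open Polynomial

/-- `E` is the characteristic polynomial of the boundary value problem
`a n * y (n+1) + b n * y n + y (n-1) = λ y n` (`n = 1,…,l`), `R0(λ) y 1 - R1(λ) y 0 = 0`,
`y (l+1) = 0`: that is, `E = R0 * v 1 - R1 * v 0`, where `v` is the polynomial solution of
the difference equation with `v (l+1) = 0`, `v l = 1`. -/
def IsCharPoly (l : ℕ) (a b : ℕ → ℂ) (R0 R1 E : Polynomial ℂ) : Prop :=
  ∃ v : ℕ → Polynomial ℂ, v (l + 1) = 0 ∧ v l = 1 ∧
    (∀ n, 1 ≤ n → n ≤ l →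
      v (n - 1) = (X - C (b n)) * v n - C (a n) * v (n + 1)) ∧
    R0 * v 1 - R1 * v 0 = E

/-!
Read from the right end, the polynomial solution `v` is a sequence `P k = v (l - k)` of monic
polynomials with `deg P k = k`, given by `P (k + 2) = (X - β (k + 1)) * P (k + 1) - α k * P k`.
Hence `R_0 v_1 - R_1 v_0 = E` is an equation for two monic polynomials of degrees `l - 1` and `l`.
After their leading terms are subtracted it is a linear system with the Sylvester matrix of `R_0`
and `-R_1`. For coprime polynomials the resultant is nonzero, so near the given data the system
has a unique solution, and by Cramer's rule this depends differentiably on the data. Division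
with remainder then recovers the coefficients of the recurrence from `P l` and `P (l - 1)`, one
step at a time: they are determined uniquely, they are differentiable functions of the data, and
the nonzero ones stay nonzero nearby. The bound `C δ` is the Lipschitz estimate at a point of
differentiability.
-/

open Filter Topology

section MonicOfDegree

lemma isMonicOfDegree_iff_degree_sub_X_pow_lt {R : Type*} [Ring R] [Nontrivial R] {p : R[X]}
    {n : ℕ} : IsMonicOfDegree p n ↔ (p - X ^ n).degree < (n : WithBot ℕ) := by
  rw [isMonicOfDegree_iff, natDegree_le_iff_coeff_eq_zero, degree_lt_iff_coeff_zero]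
  constructor
  · rintro ⟨hgt, hn⟩ k hk
    rcases hk.eq_or_lt with rfl | hk
    · simp [hn]
    · simp [hgt k hk, coeff_X_pow, hk.ne']
  · refine fun h => ⟨fun k hk => ?_, ?_⟩
    · simpa [coeff_X_pow, hk.ne'] using h k hk.le
    · simpa [sub_eq_zero] using h n le_rfl

lemma degree_sub_mul_X_pow_sub_mul_X_pow_lt {R : Type*} [Ring R] {f g e : R[X]} {m n : ℕ}
    (hf : f.natDegree ≤ m) (hg : g.natDegree ≤ n) (he : e.natDegree ≤ m + n)
    (hlead : e.coeff (m + n) = f.coeff m + g.coeff n) :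
    (e - f * X ^ n - g * X ^ m).degree < ((m + n : ℕ) : WithBot ℕ) := by
  rw [degree_lt_iff_coeff_zero]
  intro k hk
  rw [coeff_sub, coeff_sub, coeff_mul_X_pow', coeff_mul_X_pow', if_pos (by lia), if_pos (by lia)]
  rcases hk.eq_or_lt with rfl | hk
  · simp [hlead]
  · rw [coeff_eq_zero_of_natDegree_lt (he.trans_lt hk),
      coeff_eq_zero_of_natDegree_lt (p := f) (by lia),
      coeff_eq_zero_of_natDegree_lt (p := g) (by lia), sub_zero, sub_zero]

end MonicOfDegree

section Bezout

variable {K : Type*} [Field K] {f g : K[X]} {m n : ℕ}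

lemma resultant_ne_zero_of_coeff_ne_zero (hfg : IsCoprime f g)
    (hf : f.natDegree ≤ m) (hg : g.natDegree ≤ n) (h : f.coeff m ≠ 0 ∨ g.coeff n ≠ 0) :
    f.resultant g m n ≠ 0 := by
  have hne := resultant_ne_zero f g hfg
  rcases h with hfm | hgn
  · obtain rfl : f.natDegree = m := hf.antisymm (le_natDegree_of_ne_zero hfm)
    obtain ⟨k, rfl⟩ := Nat.exists_eq_add_of_le hg
    rw [resultant_add_right_deg _ _ _ _ _ le_rfl]
    exact mul_ne_zero (pow_ne_zero _ hfm) hne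
  · obtain rfl : g.natDegree = n := hg.antisymm (le_natDegree_of_ne_zero hgn)
    obtain ⟨k, rfl⟩ := Nat.exists_eq_add_of_le hf
    rw [resultant_add_left_deg _ _ _ _ _ le_rfl]
    exact mul_ne_zero (mul_ne_zero (by simp) (pow_ne_zero _ hgn)) hne

lemma sylvester_mulVec_append {R : Type*} [CommRing R] {f g p q : R[X]} {m n : ℕ}
    (hf : f.natDegree ≤ m) (hg : g.natDegree ≤ n)
    (hq : q.degree < (m : WithBot ℕ)) (hp : p.degree < (n : WithBot ℕ)) :
    (sylvester f g m n).mulVec (Fin.append (toFn m q) (toFn n p)) =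
      toFn (m + n) (f * p + g * q) := by
  let qp : degreeLT R m × degreeLT R n := (⟨q, mem_degreeLT.2 hq⟩, ⟨p, mem_degreeLT.2 hp⟩)
  have hrepr : ⇑((degreeLT.basisProd R m n).repr qp) = Fin.append (toFn m q) (toFn n p) := by
    ext i
    induction i using Fin.addCases <;> simp [degreeLT.basisProd, qp, toFn]
  have h := LinearMap.toMatrix_mulVec_repr (degreeLT.basisProd R m n) (degreeLT.basis R (m + n))
    (sylvesterMap f g hf hg) qp
  rw [hrepr, degreeLT.basisProd, toMatrix_sylvesterMap'] at h
  exact h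

lemma toFn_eq_iff_of_degree_lt {R : Type*} [Semiring R] [DecidableEq R] {p : R[X]} {n : ℕ}
    (hp : p.degree < (n : WithBot ℕ)) {v : Fin n → R} : toFn n p = v ↔ p = ofFn n v := by
  refine ⟨?_, fun h => h ▸ toFn_comp_ofFn_eq_id n v⟩
  rintro rfl
  rw [degree_lt_iff_coeff_zero] at hp
  ext k
  rcases lt_or_ge k n with hk | hk
  · rw [ofFn_coeff_eq_val_of_lt _ hk]
    rfl
  · rw [ofFn_coeff_eq_zero_of_ge _ hk, hp k hk]

variable [DecidableEq K]

/-- The pair `(q, p)` with `deg q < m`, `deg p < n` and `f * p + g * q = G`, read off from the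
solution of the linear system whose matrix is the Sylvester matrix. It has this meaning when the
resultant of `f` and `g` in degrees `m` and `n` is nonzero. -/
noncomputable def bezoutPair (f g : K[X]) (m n : ℕ) (G : K[X]) : K[X] × K[X] :=
  let c := (sylvester f g m n)⁻¹.mulVec (toFn (m + n) G)
  (ofFn m fun i => c (i.castAdd n), ofFn n fun i => c (i.natAdd m))

lemma degree_bezoutPair_fst_lt (G : K[X]) :
    (bezoutPair f g m n G).1.degree < (m : WithBot ℕ) := ofFn_degree_lt _

lemma degree_bezoutPair_snd_lt (G : K[X]) :
    (bezoutPair f g m n G).2.degree < (n : WithBot ℕ) := ofFn_degree_lt _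

lemma mul_add_mul_eq_iff_eq_bezoutPair {p q G : K[X]} (hf : f.natDegree ≤ m)
    (hg : g.natDegree ≤ n) (hres : f.resultant g m n ≠ 0) (hq : q.degree < (m : WithBot ℕ))
    (hp : p.degree < (n : WithBot ℕ)) (hG : G.degree < ((m + n : ℕ) : WithBot ℕ)) :
    f * p + g * q = G ↔ (q, p) = bezoutPair f g m n G := by
  have hdeg : (f * p + g * q).degree < ((m + n : ℕ) : WithBot ℕ) :=
    mem_degreeLT.1
      (sylvesterMap f g hf hg (⟨q, mem_degreeLT.2 hq⟩, ⟨p, mem_degreeLT.2 hp⟩)).2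
  let _ : Invertible (sylvester f g m n) :=
    Matrix.invertibleOfIsUnitDet _ (isUnit_iff_ne_zero.2 hres)
  set c := (sylvester f g m n)⁻¹.mulVec (toFn (m + n) G) with hc
  calc f * p + g * q = G
      ↔ toFn (m + n) (f * p + g * q) = toFn (m + n) G := by
        rw [toFn_eq_iff_of_degree_lt hdeg, ← (toFn_eq_iff_of_degree_lt hG).1 rfl]
    _ ↔ Fin.append (toFn m q) (toFn n p) = c := by
        rw [← sylvester_mulVec_append hf hg hq hp, hc]
        constructor <;> intro h
        · rw [← h, Matrix.mulVec_mulVec, Matrix.inv_mul_of_invertible, Matrix.one_mulVec]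
        · rw [h, Matrix.mulVec_mulVec, Matrix.mul_inv_of_invertible, Matrix.one_mulVec]
    _ ↔ toFn m q = (fun i => c (i.castAdd n)) ∧ toFn n p = fun i => c (i.natAdd m) := by
        rw [← Prod.mk_inj]
        exact ((Fin.appendEquiv m n).eq_symm_apply (y := (toFn m q, toFn n p))).symm
    _ ↔ (q, p) = bezoutPair f g m n G := by
        rw [toFn_eq_iff_of_degree_lt hq, toFn_eq_iff_of_degree_lt hp, Prod.ext_iff]
        rfl

end Bezout

section Matrix

variable {𝕜 V : Type*} [NontriviallyNormedField 𝕜] [NormedAddCommGroup V] [NormedSpace 𝕜 V]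
  {x₀ : V} {ι : Type*} [Fintype ι] [DecidableEq ι] {A : V → Matrix ι ι 𝕜} {u : V → ι → 𝕜}

lemma differentiableAt_matrix_det
    (hA : ∀ i j, DifferentiableAt 𝕜 (fun x => A x i j) x₀) :
    DifferentiableAt 𝕜 (fun x => (A x).det) x₀ := by
  simp only [Matrix.det_apply']
  exact DifferentiableAt.fun_sum fun σ _ => (differentiableAt_const _).mul
    (HasFDerivAt.finsetProd fun i _ => (hA (σ i) i).hasFDerivAt).differentiableAt

lemma differentiableAt_matrix_inv_mulVec
    (hA : ∀ i j, DifferentiableAt 𝕜 (fun x => A x i j) x₀) (hu : DifferentiableAt 𝕜 u x₀)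
    (hdet : (A x₀).det ≠ 0) :
    DifferentiableAt 𝕜 (fun x => (A x)⁻¹.mulVec (u x)) x₀ := by
  have hcramer (i : ι) : DifferentiableAt 𝕜 (fun x => (A x).cramer (u x) i) x₀ := by
    simp only [Matrix.cramer_apply]
    refine differentiableAt_matrix_det fun j k => ?_
    simp only [Matrix.updateCol_apply]
    split_ifs
    · exact differentiableAt_pi.1 hu j
    · exact hA j k
  have hrule (x : V) (i : ι) :
      (A x)⁻¹.mulVec (u x) i = (A x).det⁻¹ * (A x).cramer (u x) i := by
    rw [Matrix.inv_def, Matrix.smul_mulVec, Matrix.cramer_eq_adjugate_mulVec,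
      Ring.inverse_eq_inv', Pi.smul_apply, smul_eq_mul]
  refine differentiableAt_pi.2 fun i => ?_
  simp only [hrule]
  exact ((differentiableAt_matrix_det hA).inv hdet).mul (hcramer i)

end Matrix

section CoeffDifferentiableAt

variable {𝕜 V : Type*} [NontriviallyNormedField 𝕜] [NormedAddCommGroup V] [NormedSpace 𝕜 V]
  {x₀ : V}

/-- A family of polynomials depends differentiably on its parameter at `x₀`, coefficient by
coefficient. Degrees may vary, so there is no single normed space of polynomials to use. -/
def CoeffDifferentiableAt (f : V → 𝕜[X]) (x₀ : V) : Prop :=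
  ∀ n, DifferentiableAt 𝕜 (fun x => (f x).coeff n) x₀

namespace CoeffDifferentiableAt

variable {f g e G : V → 𝕜[X]}

protected lemma const (p : 𝕜[X]) : CoeffDifferentiableAt (fun _ : V => p) x₀ :=
  fun _ => differentiableAt_const _

protected lemma C {c : V → 𝕜} (hc : DifferentiableAt 𝕜 c x₀) :
    CoeffDifferentiableAt (fun x => C (c x)) x₀ := by
  intro n
  rcases eq_or_ne n 0 with rfl | hn
  · simpa using hc
  · simp [coeff_C, hn]

protected lemma add (hf : CoeffDifferentiableAt f x₀) (hg : CoeffDifferentiableAt g x₀) :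
    CoeffDifferentiableAt (fun x => f x + g x) x₀ := fun n => by
  simpa using (hf n).fun_add (hg n)

protected lemma neg (hf : CoeffDifferentiableAt f x₀) :
    CoeffDifferentiableAt (fun x => -f x) x₀ := fun n => by
  simpa using (hf n).neg

protected lemma sub (hf : CoeffDifferentiableAt f x₀) (hg : CoeffDifferentiableAt g x₀) :
    CoeffDifferentiableAt (fun x => f x - g x) x₀ := by
  simpa only [sub_eq_add_neg] using hf.add hg.neg

protected lemma mul (hf : CoeffDifferentiableAt f x₀) (hg : CoeffDifferentiableAt g x₀) :
    CoeffDifferentiableAt (fun x => f x * g x) x₀ := by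
  intro n
  simp only [coeff_mul]
  exact DifferentiableAt.fun_sum fun i _ => (hf i.1).mul (hg i.2)

protected lemma prod {ι : Type*} (s : Finset ι) {F : ι → V → 𝕜[X]}
    (hF : ∀ i ∈ s, CoeffDifferentiableAt (F i) x₀) :
    CoeffDifferentiableAt (fun x => ∏ i ∈ s, F i x) x₀ := by
  classical
  induction s using Finset.induction_on with
  | empty => simpa using CoeffDifferentiableAt.const 1
  | insert i s hi ih =>
    simp only [Finset.prod_insert hi]
    exact (hF i (Finset.mem_insert_self i s)).mul
      (ih fun j hj => hF j (Finset.mem_insert_of_mem hj))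

protected lemma ofFn [DecidableEq 𝕜] {n : ℕ} {c : V → Fin n → 𝕜} (hc : DifferentiableAt 𝕜 c x₀) :
    CoeffDifferentiableAt (fun x => ofFn n (c x)) x₀ := by
  intro k
  rcases lt_or_ge k n with hk | hk
  · simpa only [ofFn_coeff_eq_val_of_lt _ hk] using differentiableAt_pi.1 hc ⟨k, hk⟩
  · simp only [ofFn_coeff_eq_zero_of_ge _ hk, differentiableAt_const]

lemma sylvester_apply (hf : CoeffDifferentiableAt f x₀) (hg : CoeffDifferentiableAt g x₀)
    {m n : ℕ} (i j : Fin (m + n)) :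
    DifferentiableAt 𝕜 (fun x => sylvester (f x) (g x) m n i j) x₀ := by
  induction j using Fin.addCases <;>
    simp only [sylvester, Matrix.of_apply, Fin.addCases_left, Fin.addCases_right] <;>
    split_ifs <;> first | exact hg _ | exact hf _ | exact differentiableAt_const _

lemma eventually_resultant_ne_zero (hf : CoeffDifferentiableAt f x₀)
    (hg : CoeffDifferentiableAt g x₀) {m n : ℕ} (hres : (f x₀).resultant (g x₀) m n ≠ 0) :
    ∀ᶠ x in 𝓝 x₀, (f x).resultant (g x) m n ≠ 0 :=
  (differentiableAt_matrix_det (hf.sylvester_apply hg)).continuousAt.eventually_ne hres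

lemma bezoutPair [DecidableEq 𝕜] (hf : CoeffDifferentiableAt f x₀) (hg : CoeffDifferentiableAt g x₀)
    (hG : CoeffDifferentiableAt G x₀) {m n : ℕ} (hres : (f x₀).resultant (g x₀) m n ≠ 0) :
    CoeffDifferentiableAt (fun x => (bezoutPair (f x) (g x) m n (G x)).1) x₀ ∧
      CoeffDifferentiableAt (fun x => (bezoutPair (f x) (g x) m n (G x)).2) x₀ := by
  have hsol := differentiableAt_pi.1 <| differentiableAt_matrix_inv_mulVec
    (hf.sylvester_apply hg) (u := fun x => toFn (m + n) (G x))
    (differentiableAt_pi.2 fun i => hG i) hres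
  exact ⟨.ofFn (differentiableAt_pi.2 fun i => hsol (i.castAdd n)),
    .ofFn (differentiableAt_pi.2 fun i => hsol (i.natAdd m))⟩

lemma exists_isMonicOfDegree_mul_add_mul_eq_iff (hf : CoeffDifferentiableAt f x₀)
    (hg : CoeffDifferentiableAt g x₀) (he : CoeffDifferentiableAt e x₀) {m n : ℕ}
    (hfm : ∀ x, (f x).natDegree ≤ m) (hgn : ∀ x, (g x).natDegree ≤ n)
    (hemn : ∀ x, (e x).natDegree ≤ m + n)
    (hlead : ∀ x, (e x).coeff (m + n) = (f x).coeff m + (g x).coeff n)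
    (hres : (f x₀).resultant (g x₀) m n ≠ 0) :
    ∃ q p : V → 𝕜[X], CoeffDifferentiableAt q x₀ ∧ CoeffDifferentiableAt p x₀ ∧
      ∀ᶠ x in 𝓝 x₀, ∀ q' p', (IsMonicOfDegree q' m ∧ IsMonicOfDegree p' n ∧
        f x * p' + g x * q' = e x) ↔ q' = q x ∧ p' = p x := by
  classical
  let G (x : V) : 𝕜[X] := e x - f x * X ^ n - g x * X ^ m
  have hG : CoeffDifferentiableAt G x₀ := (he.sub (hf.mul (.const _))).sub (hg.mul (.const _))
  obtain ⟨hq, hp⟩ := hf.bezoutPair hg hG hres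
  refine ⟨_, _, hq.add (.const (X ^ m)), hp.add (.const (X ^ n)), ?_⟩
  filter_upwards [hf.eventually_resultant_ne_zero hg hres] with x hx q' p'
  have hGx : (G x).degree < ((m + n : ℕ) : WithBot ℕ) :=
    degree_sub_mul_X_pow_sub_mul_X_pow_lt (hfm x) (hgn x) (hemn x) (hlead x)
  have hshift : f x * p' + g x * q' = e x ↔
      f x * (p' - X ^ n) + g x * (q' - X ^ m) = G x := by
    simp only [G]
    constructor <;> intro h <;> linear_combination h
  simp only [isMonicOfDegree_iff_degree_sub_X_pow_lt, hshift, ← sub_eq_iff_eq_add]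
  constructor
  · rintro ⟨hq', hp', heq⟩
    exact Prod.mk_inj.1
      ((mul_add_mul_eq_iff_eq_bezoutPair (hfm x) (hgn x) hx hq' hp' hGx).1 heq)
  · rintro ⟨hq', hp'⟩
    have hqdeg := hq' ▸ degree_bezoutPair_fst_lt (f := f x) (g := g x) (n := n) (G x)
    have hpdeg := hp' ▸ degree_bezoutPair_snd_lt (f := f x) (g := g x) (m := m) (G x)
    exact ⟨hqdeg, hpdeg, (mul_add_mul_eq_iff_eq_bezoutPair (hfm x) (hgn x) hx hqdeg hpdeg
      hGx).2 (Prod.ext hq' hp')⟩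

end CoeffDifferentiableAt

end CoeffDifferentiableAt

section ThreeTermRecurrence

/-- The monic polynomials `P 0 = 1`, `P 1 = X - β 0`,
`P (k + 2) = (X - β (k + 1)) * P (k + 1) - α k * P k`. They are the polynomial solution of the
boundary value problem read backwards from the right end: `P k = v (l - k)`. -/
noncomputable def threeTermPoly {R : Type*} [CommRing R] (α β : ℕ → R) : ℕ → R[X]
  | 0 => 1
  | 1 => X - C (β 0)
  | k + 2 => (X - C (β (k + 1))) * threeTermPoly α β (k + 1) - C (α k) * threeTermPoly α β k

/-- The coefficient `b` of a three-term recurrence `q = (X - b) * p - a * r` with `q`, `p`, `r`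
monic of degrees `n + 1`, `n`, `n - 1`. The factor `X` accounts for the case `n = 0`, where
there is no `r`. -/
noncomputable def recurrenceShift {R : Type*} [CommRing R] (n : ℕ) (q p : R[X]) : R :=
  (X * p).coeff n - q.coeff n

/-- The term `a * r` of a three-term recurrence `q = (X - b) * p - a * r` with `q`, `p`, `r`
monic of degrees `n + 1`, `n`, `n - 1`. -/
noncomputable def recurrenceRemainder {R : Type*} [CommRing R] (n : ℕ) (q p : R[X]) : R[X] :=
  (X - C (recurrenceShift n q p)) * p - q

variable {R : Type*} [CommRing R] {α β α' β' : ℕ → R} {p q : R[X]} {n : ℕ}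

lemma threeTermPoly_congr (n : ℕ) (hα : ∀ k, k + 1 < n → α k = α' k)
    (hβ : ∀ k < n, β k = β' k) : threeTermPoly α β n = threeTermPoly α' β' n := by
  induction n using Nat.twoStepInduction with
  | zero => rfl
  | one => rw [threeTermPoly, threeTermPoly, hβ 0 one_pos]
  | more n ih₀ ih₁ =>
    rw [threeTermPoly, threeTermPoly, hα n (by lia), hβ (n + 1) (by lia),
      ih₀ (fun k hk => hα k (by lia)) fun k hk => hβ k (by lia),
      ih₁ (fun k hk => hα k (by lia)) fun k hk => hβ k (by lia)]

lemma threeTermPoly_update_of_le {n k : ℕ} (hk : k ≤ n + 1) (α β : ℕ → R) (a b : R) :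
    threeTermPoly (Function.update α n a) (Function.update β (n + 1) b) k =
      threeTermPoly α β k :=
  threeTermPoly_congr k (fun _ _ => Function.update_of_ne (by lia) _ _)
    fun _ _ => Function.update_of_ne (by lia) _ _

lemma threeTermPoly_update_add_two (n : ℕ) (α β : ℕ → R) (a b : R) :
    threeTermPoly (Function.update α n a) (Function.update β (n + 1) b) (n + 2) =
      (X - C b) * threeTermPoly α β (n + 1) - C a * threeTermPoly α β n := by
  rw [threeTermPoly, threeTermPoly_update_of_le le_rfl, threeTermPoly_update_of_le n.le_succ,
    Function.update_self, Function.update_self]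

variable [Nontrivial R]

lemma isMonicOfDegree_threeTermPoly (α β : ℕ → R) (n : ℕ) :
    IsMonicOfDegree (threeTermPoly α β n) n := by
  induction n using Nat.twoStepInduction with
  | zero => exact isMonicOfDegree_zero_iff.2 rfl
  | one => exact isMonicOfDegree_X_sub_one _
  | more n ih₀ ih₁ =>
    rw [threeTermPoly, show n + 2 = 1 + (n + 1) by lia]
    refine ((isMonicOfDegree_X_sub_one _).mul ih₁).sub ((natDegree_C_mul_le _ _).trans_lt ?_)
    rw [ih₀.natDegree_eq]
    lia

lemma degree_X_sub_C_mul_sub_lt_iff (hq : IsMonicOfDegree q (n + 1)) (hp : IsMonicOfDegree p n)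
    {b : R} : ((X - C b) * p - q).degree < (n : WithBot ℕ) ↔ b = recurrenceShift n q p := by
  have hn : ((X - C b) * p - q).coeff n = recurrenceShift n q p - b := by
    rw [sub_mul, coeff_sub, coeff_sub, coeff_C_mul, ((isMonicOfDegree_iff p n).1 hp).2,
      recurrenceShift]
    ring
  rw [degree_lt_iff_coeff_zero]
  refine ⟨fun h => (sub_eq_zero.1 (hn ▸ h n le_rfl)).symm, fun hb k hk => ?_⟩
  rcases hk.eq_or_lt with rfl | hk
  · rw [hn, hb, sub_self]
  · have hmul : IsMonicOfDegree ((X - C b) * p) (n + 1) :=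
      add_comm 1 n ▸ (isMonicOfDegree_X_sub_one b).mul hp
    rw [coeff_sub, hmul.coeff_eq hq hk, sub_self]

lemma degree_recurrenceRemainder_lt (hq : IsMonicOfDegree q (n + 1))
    (hp : IsMonicOfDegree p n) : (recurrenceRemainder n q p).degree < (n : WithBot ℕ) :=
  (degree_X_sub_C_mul_sub_lt_iff hq hp).2 rfl

lemma recurrenceShift_threeTermPoly (α β : ℕ → R) (n : ℕ) :
    recurrenceShift (n + 1) (threeTermPoly α β (n + 2)) (threeTermPoly α β (n + 1)) =
      β (n + 1) := by
  refine ((degree_X_sub_C_mul_sub_lt_iff (isMonicOfDegree_threeTermPoly α β (n + 2))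
    (isMonicOfDegree_threeTermPoly α β (n + 1))).1 ?_).symm
  rw [threeTermPoly, sub_sub_cancel]
  have hdeg : (C (α n) * threeTermPoly α β n).natDegree ≤ n :=
    (natDegree_C_mul_le _ _).trans (isMonicOfDegree_threeTermPoly α β n).natDegree_eq.le
  exact degree_lt_iff_coeff_zero _ _ |>.2 fun k hk =>
    coeff_eq_zero_of_natDegree_lt (hdeg.trans_lt hk)

lemma recurrenceRemainder_threeTermPoly (α β : ℕ → R) (n : ℕ) :
    recurrenceRemainder (n + 1) (threeTermPoly α β (n + 2)) (threeTermPoly α β (n + 1)) =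
      C (α n) * threeTermPoly α β n := by
  rw [recurrenceRemainder, recurrenceShift_threeTermPoly, threeTermPoly, sub_sub_cancel]

lemma coeff_C_mul_threeTermPoly (c : R) (α β : ℕ → R) (n : ℕ) :
    (C c * threeTermPoly α β n).coeff n = c := by
  rw [coeff_C_mul, ((isMonicOfDegree_iff _ n).1 (isMonicOfDegree_threeTermPoly α β n)).2, mul_one]

lemma eq_of_threeTermPoly_eq [NoZeroDivisors R] (n : ℕ) (hα : ∀ k < n, α k ≠ 0)
    (hsucc : threeTermPoly α' β' (n + 1) = threeTermPoly α β (n + 1))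
    (h : threeTermPoly α' β' n = threeTermPoly α β n) :
    (∀ k < n, α' k = α k) ∧ ∀ k ≤ n, β' k = β k := by
  induction n with
  | zero =>
    have hβ : β' 0 = β 0 := by simpa [threeTermPoly] using hsucc
    exact ⟨by simp, by simpa using hβ⟩
  | succ n ih =>
    have hβn : β' (n + 1) = β (n + 1) := by
      rw [← recurrenceShift_threeTermPoly α' β', hsucc, h, recurrenceShift_threeTermPoly]
    have hrem : C (α' n) * threeTermPoly α' β' n = C (α n) * threeTermPoly α β n := by
      rw [← recurrenceRemainder_threeTermPoly, hsucc, h, recurrenceRemainder_threeTermPoly]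
    have hαn : α' n = α n := by
      simpa only [coeff_C_mul_threeTermPoly] using congr_arg (coeff · n) hrem
    have hP : threeTermPoly α' β' n = threeTermPoly α β n :=
      mul_left_cancel₀ (C_ne_zero.2 (hα n n.lt_succ_self)) (hαn ▸ hrem)
    obtain ⟨ihα, ihβ⟩ := ih (fun k hk => hα k (hk.trans n.lt_succ_self)) h hP
    refine ⟨fun k hk => ?_, fun k hk => ?_⟩
    · rcases (Nat.lt_succ_iff.1 hk).eq_or_lt with rfl | hk
      exacts [hαn, ihα k hk]
    · rcases hk.eq_or_lt with rfl | hk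
      exacts [hβn, ihβ k (Nat.lt_succ_iff.1 hk)]

end ThreeTermRecurrence

section LocalRecurrence

lemma isMonicOfDegree_C_inv_coeff_mul {K : Type*} [Field K] {r : K[X]} {m : ℕ}
    (hr : r.degree < ((m + 1 : ℕ) : WithBot ℕ)) (hrm : r.coeff m ≠ 0) :
    IsMonicOfDegree (C (r.coeff m)⁻¹ * r) m := by
  rw [isMonicOfDegree_iff, coeff_C_mul, inv_mul_cancel₀ hrm]
  exact ⟨(natDegree_C_mul_le _ _).trans <| natDegree_le_iff_coeff_eq_zero.2 <|
    (degree_lt_iff_coeff_zero r (m + 1)).1 hr, rfl⟩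

lemma differentiableAt_update {ι 𝕜 V E : Type*} [DecidableEq ι] [NontriviallyNormedField 𝕜]
    [NormedAddCommGroup V] [NormedSpace 𝕜 V] [NormedAddCommGroup E] [NormedSpace 𝕜 E]
    {F : V → ι → E} {c : V → E} {x₀ : V} {i : ι} (k : ι)
    (hF : ∀ j, DifferentiableAt 𝕜 (fun x => F x j) x₀) (hc : DifferentiableAt 𝕜 c x₀) :
    DifferentiableAt 𝕜 (fun x => Function.update (F x) i (c x) k) x₀ := by
  rcases eq_or_ne k i with rfl | hk
  · simpa only [Function.update_self] using hc
  · simpa only [Function.update_of_ne hk] using hF k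

variable {𝕜 V : Type*} [NontriviallyNormedField 𝕜] [NormedAddCommGroup V] [NormedSpace 𝕜 V]
  {x₀ : V} {q p f g e : V → 𝕜[X]} {α β : ℕ → 𝕜}

lemma CoeffDifferentiableAt.recurrenceShift (hq : CoeffDifferentiableAt q x₀)
    (hp : CoeffDifferentiableAt p x₀) (n : ℕ) :
    DifferentiableAt 𝕜 (fun x => recurrenceShift n (q x) (p x)) x₀ :=
  (((CoeffDifferentiableAt.const X).mul hp) n).sub (hq n)

lemma CoeffDifferentiableAt.recurrenceRemainder (hq : CoeffDifferentiableAt q x₀)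
    (hp : CoeffDifferentiableAt p x₀) (n : ℕ) :
    CoeffDifferentiableAt (fun x => recurrenceRemainder n (q x) (p x)) x₀ :=
  (((CoeffDifferentiableAt.const X).sub (.C (hq.recurrenceShift hp n))).mul hp).sub hq

lemma exists_differentiableAt_threeTermPoly_eq (m : ℕ) (hα : ∀ k < m, α k ≠ 0)
    (hq : CoeffDifferentiableAt q x₀) (hp : CoeffDifferentiableAt p x₀)
    (hqm : ∀ᶠ x in 𝓝 x₀, IsMonicOfDegree (q x) (m + 1))
    (hpm : ∀ᶠ x in 𝓝 x₀, IsMonicOfDegree (p x) m)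
    (hq₀ : q x₀ = threeTermPoly α β (m + 1)) (hp₀ : p x₀ = threeTermPoly α β m) :
    ∃ A B : V → ℕ → 𝕜, (∀ k, DifferentiableAt 𝕜 (fun x => A x k) x₀) ∧
      (∀ k, DifferentiableAt 𝕜 (fun x => B x k) x₀) ∧
      ∀ᶠ x in 𝓝 x₀, (∀ k < m, A x k ≠ 0) ∧ threeTermPoly (A x) (B x) (m + 1) = q x ∧
        threeTermPoly (A x) (B x) m = p x := by
  induction m generalizing q p with
  | zero =>
    refine ⟨fun _ _ => 0, fun x _ => recurrenceShift 0 (q x) (p x), by simp,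
      fun _ => hq.recurrenceShift hp 0, ?_⟩
    filter_upwards [hqm, hpm] with x hqx hpx
    have hp1 : p x = 1 := isMonicOfDegree_zero_iff.1 hpx
    obtain ⟨c, hc⟩ := isMonicOfDegree_one_iff.1 hqx
    simp [threeTermPoly, hp1, hc, recurrenceShift]
  | succ m ih =>
    let b (x : V) : 𝕜 := recurrenceShift (m + 1) (q x) (p x)
    let r (x : V) : 𝕜[X] := recurrenceRemainder (m + 1) (q x) (p x)
    have hr : CoeffDifferentiableAt r x₀ := hq.recurrenceRemainder hp (m + 1)
    have hr₀ : r x₀ = C (α m) * threeTermPoly α β m := by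
      simp only [r, hq₀, hp₀, recurrenceRemainder_threeTermPoly]
    have ha₀ : (r x₀).coeff m = α m := by rw [hr₀, coeff_C_mul_threeTermPoly]
    have hαm : α m ≠ 0 := hα m m.lt_succ_self
    have ha : ∀ᶠ x in 𝓝 x₀, (r x).coeff m ≠ 0 := (hr m).continuousAt.eventually_ne (ha₀ ▸ hαm)
    have hpred : ∀ᶠ x in 𝓝 x₀, IsMonicOfDegree (C ((r x).coeff m)⁻¹ * r x) m := by
      filter_upwards [hqm, hpm, ha] with x hqx hpx hax
      exact isMonicOfDegree_C_inv_coeff_mul (degree_recurrenceRemainder_lt hqx hpx) hax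
    obtain ⟨A, B, hA, hB, hAB⟩ := ih (fun k hk => hα k (hk.trans m.lt_succ_self)) hp
      ((CoeffDifferentiableAt.C ((hr m).fun_inv (ha₀.trans_ne hαm))).mul hr) hpm hpred hp₀
      (by rw [ha₀, hr₀, ← mul_assoc, ← C_mul, inv_mul_cancel₀ hαm, C_1, one_mul])
    refine ⟨fun x => Function.update (A x) m ((r x).coeff m),
      fun x => Function.update (B x) (m + 1) (b x),
      (differentiableAt_update · hA (hr m)),
      (differentiableAt_update · hB (hq.recurrenceShift hp (m + 1))), ?_⟩
    filter_upwards [hAB, ha] with x ⟨hAx, hsucc, hm⟩ hax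
    refine ⟨fun k hk => ?_, ?_, ?_⟩
    · rcases (Nat.lt_succ_iff.1 hk).eq_or_lt with rfl | hk
      · rwa [Function.update_self]
      · rw [Function.update_of_ne hk.ne]
        exact hAx k hk
    · rw [threeTermPoly_update_add_two, hsucc, hm, ← mul_assoc, ← C_mul, mul_inv_cancel₀ hax,
        C_1, one_mul]
      exact sub_sub_cancel ((X - C (b x)) * p x) (q x)
    · rw [threeTermPoly_update_of_le le_rfl, hsucc]

theorem exists_differentiableAt_mul_threeTermPoly_add_mul_eq (hf : CoeffDifferentiableAt f x₀)
    (hg : CoeffDifferentiableAt g x₀) (he : CoeffDifferentiableAt e x₀) {m : ℕ}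
    (hfm : ∀ x, (f x).natDegree ≤ m + 1) (hgm : ∀ x, (g x).natDegree ≤ m)
    (hem : ∀ x, (e x).natDegree ≤ m + 1 + m)
    (hlead : ∀ x, (e x).coeff (m + 1 + m) = (f x).coeff (m + 1) + (g x).coeff m)
    (hres : (f x₀).resultant (g x₀) (m + 1) m ≠ 0) (hα : ∀ k < m, α k ≠ 0)
    (h₀ : f x₀ * threeTermPoly α β m + g x₀ * threeTermPoly α β (m + 1) = e x₀) :
    ∃ A B : V → ℕ → 𝕜, (∀ k, DifferentiableAt 𝕜 (fun x => A x k) x₀) ∧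
      (∀ k, DifferentiableAt 𝕜 (fun x => B x k) x₀) ∧
      ∀ᶠ x in 𝓝 x₀, (∀ k < m, A x k ≠ 0) ∧
        f x * threeTermPoly (A x) (B x) m + g x * threeTermPoly (A x) (B x) (m + 1) = e x ∧
        ∀ α' β' : ℕ → 𝕜,
          f x * threeTermPoly α' β' m + g x * threeTermPoly α' β' (m + 1) = e x →
            (∀ k < m, α' k = A x k) ∧ ∀ k ≤ m, β' k = B x k := by
  classical
  obtain ⟨q, p, hq, hp, hqp⟩ :=
    hf.exists_isMonicOfDegree_mul_add_mul_eq_iff hg he hfm hgm hem hlead hres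
  have hP (α β : ℕ → 𝕜) (n : ℕ) := isMonicOfDegree_threeTermPoly α β n
  obtain ⟨hq₀, hp₀⟩ := (hqp.self_of_nhds _ _).1 ⟨hP α β (m + 1), hP α β m, h₀⟩
  have hmonic := hqp.mono fun x hx => (hx (q x) (p x)).2 ⟨rfl, rfl⟩
  obtain ⟨A, B, hA, hB, hAB⟩ := exists_differentiableAt_threeTermPoly_eq m hα hq hp
    (hmonic.mono fun _ h => h.1) (hmonic.mono fun _ h => h.2.1) hq₀.symm hp₀.symm
  refine ⟨A, B, hA, hB, ?_⟩
  filter_upwards [hqp, hmonic, hAB] with x hx ⟨_, _, hex⟩ ⟨hAx, hsucc, hm⟩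
  refine ⟨hAx, by rwa [hsucc, hm], fun α' β' h' => ?_⟩
  obtain ⟨hq', hp'⟩ := (hx _ _).1 ⟨hP α' β' (m + 1), hP α' β' m, h'⟩
  exact eq_of_threeTermPoly_eq m hAx (hq'.trans hsucc.symm) (hp'.trans hm.symm)

end LocalRecurrence

section CharPoly

lemma isCharPoly_succ_iff {m : ℕ} {a b : ℕ → ℂ} {R0 R1 E : ℂ[X]} :
    IsCharPoly (m + 1) a b R0 R1 E ↔
      R0 * threeTermPoly (fun k => a (m - k)) (fun k => b (m + 1 - k)) m -
        R1 * threeTermPoly (fun k => a (m - k)) (fun k => b (m + 1 - k)) (m + 1) = E := by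
  set P := threeTermPoly (fun k => a (m - k)) (fun k => b (m + 1 - k)) with hP
  constructor
  · rintro ⟨v, hv_end, hv_last, hv, rfl⟩
    have hvP (k : ℕ) (hk : k ≤ m + 1) : v (m + 1 - k) = P k := by
      induction k using Nat.twoStepInduction with
      | zero => exact hv_last
      | one =>
        rw [hv (m + 1) (by lia) le_rfl, hv_end, hv_last, hP, threeTermPoly]
        simp
      | more k ih₀ ih₁ =>
        have hstep := hv (m - k) (by lia) (by lia)
        rw [show m - k + 1 = m + 1 - k by lia, ih₀ (by lia), show m - k = m + 1 - (k + 1) by lia,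
          ih₁ (by lia)] at hstep
        rw [show m + 1 - (k + 2) = m + 1 - (k + 1) - 1 by lia, hstep, hP, threeTermPoly,
          show m + 1 - (k + 1) = m - k by lia]
    rw [← hvP m m.le_succ, ← hvP (m + 1) le_rfl, Nat.add_sub_cancel_left, Nat.sub_self]
  · intro h
    refine ⟨fun n => if n ≤ m + 1 then P (m + 1 - n) else 0, by simp, by simp [hP, threeTermPoly],
      fun n hn hnm => ?_, by simpa using h⟩
    rcases hnm.eq_or_lt with rfl | hnm'
    · simp [hP, threeTermPoly]
    · obtain ⟨k, rfl⟩ : ∃ k, m = n + k := Nat.exists_eq_add_of_le (Nat.lt_succ_iff.1 hnm')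
      beta_reduce
      rw [if_pos (by lia), if_pos (by lia), if_pos (by lia),
        show n + k + 1 - (n - 1) = k + 2 by lia, show n + k + 1 - n = k + 1 by lia,
        show n + k + 1 - (n + 1) = k by lia, hP, threeTermPoly, Nat.add_sub_cancel,
        show n + k + 1 - (k + 1) = n by lia]

lemma isCharPoly_reverse_iff {m : ℕ} {α β : ℕ → ℂ} {R0 R1 E : ℂ[X]} :
    IsCharPoly (m + 1) (fun n => if n = m + 1 then 1 else α (m - n)) (fun n => β (m + 1 - n))
        R0 R1 E ↔
      R0 * threeTermPoly α β m - R1 * threeTermPoly α β (m + 1) = E := by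
  have hP (n : ℕ) (hn : n ≤ m + 1) :
      threeTermPoly (fun k => if m - k = m + 1 then 1 else α (m - (m - k)))
        (fun k => β (m + 1 - (m + 1 - k))) n = threeTermPoly α β n :=
    threeTermPoly_congr n
      (fun k hk => by rw [if_neg (by lia), Nat.sub_sub_self (by lia)])
      (fun k hk => by rw [Nat.sub_sub_self (by lia)])
  rw [isCharPoly_succ_iff, hP m m.le_succ, hP (m + 1) le_rfl]

variable {V : Type*} [NormedAddCommGroup V] [NormedSpace ℂ V] {x₀ : V} {r0 r1 e : V → ℂ[X]}
  {m : ℕ} {a b : ℕ → ℂ}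

theorem exists_differentiableAt_isCharPoly (h0 : CoeffDifferentiableAt r0 x₀)
    (h1 : CoeffDifferentiableAt r1 x₀) (he : CoeffDifferentiableAt e x₀)
    (h0m : ∀ x, (r0 x).natDegree ≤ m + 1) (h1m : ∀ x, (r1 x).natDegree ≤ m)
    (hem : ∀ x, (e x).natDegree ≤ m + 1 + m)
    (hlead : ∀ x, (e x).coeff (m + 1 + m) = (r0 x).coeff (m + 1) - (r1 x).coeff m)
    (hcop : IsCoprime (r0 x₀) (r1 x₀)) (hne : (r0 x₀).coeff (m + 1) ≠ 0 ∨ (r1 x₀).coeff m ≠ 0)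
    (ha : ∀ n, 1 ≤ n → n ≤ m → a n ≠ 0) (h₀ : IsCharPoly (m + 1) a b (r0 x₀) (r1 x₀) (e x₀)) :
    ∃ A B : V → ℕ → ℂ, (∀ n, DifferentiableAt ℂ (fun x => A x n) x₀) ∧
      (∀ n, DifferentiableAt ℂ (fun x => B x n) x₀) ∧
      ∀ᶠ x in 𝓝 x₀, (∀ n, 1 ≤ n → n ≤ m → A x n ≠ 0) ∧ A x (m + 1) = 1 ∧
        IsCharPoly (m + 1) (A x) (B x) (r0 x) (r1 x) (e x) ∧
        ∀ a' b' : ℕ → ℂ, a' (m + 1) = 1 → IsCharPoly (m + 1) a' b' (r0 x) (r1 x) (e x) →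
          ∀ n, 1 ≤ n → n ≤ m + 1 → a' n = A x n ∧ b' n = B x n := by
  have hres : (r0 x₀).resultant (-r1 x₀) (m + 1) m ≠ 0 :=
    resultant_ne_zero_of_coeff_ne_zero hcop.neg_right (h0m x₀) ((natDegree_neg _).trans_le (h1m x₀))
      (hne.imp_right fun h => by rwa [coeff_neg, neg_ne_zero])
  rw [isCharPoly_succ_iff, sub_eq_add_neg, ← neg_mul] at h₀
  obtain ⟨A, B, hA, hB, hAB⟩ := exists_differentiableAt_mul_threeTermPoly_add_mul_eq h0 h1.neg he
    h0m (fun x => (natDegree_neg _).trans_le (h1m x)) hem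
    (fun x => by rw [hlead, coeff_neg, sub_eq_add_neg]) hres
    (fun k hk => ha (m - k) (by lia) (by lia)) h₀
  refine ⟨fun x n => if n = m + 1 then 1 else A x (m - n), fun x n => B x (m + 1 - n),
    fun n => ?_, fun n => hB _, ?_⟩
  · beta_reduce
    split_ifs
    exacts [differentiableAt_const 1, hA _]
  filter_upwards [hAB] with x ⟨hne, hx, huniq⟩
  refine ⟨fun n hn hnm => ?_, if_pos rfl, ?_, fun a' b' ha' h' n hn hnm => ?_⟩
  · rw [if_neg (by lia)]
    exact hne _ (by lia)
  · rwa [isCharPoly_reverse_iff, sub_eq_add_neg, ← neg_mul]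
  · obtain ⟨hα, hβ⟩ := huniq _ _ (by rwa [isCharPoly_succ_iff, sub_eq_add_neg, ← neg_mul] at h')
    refine ⟨?_, by simpa [Nat.sub_sub_self hnm] using hβ (m + 1 - n) (by lia)⟩
    split_ifs with hn'
    · rw [hn', ha']
    · simpa [Nat.sub_sub_self (show n ≤ m by lia)] using hα (m - n) (by lia)

lemma exists_eventually_norm_sub_le_mul {𝕜 V E ι : Type*} [NontriviallyNormedField 𝕜]
    [NormedAddCommGroup V] [NormedSpace 𝕜 V] [NormedAddCommGroup E] [NormedSpace 𝕜 E]
    {F : V → ι → E} {x₀ : V} (s : Finset ι)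
    (hF : ∀ i ∈ s, DifferentiableAt 𝕜 (fun x => F x i) x₀) :
    ∃ K > 0, ∀ᶠ x in 𝓝 x₀, ∀ i ∈ s, ‖F x₀ i - F x i‖ ≤ K * ‖x - x₀‖ := by
  have hrestrict : DifferentiableAt 𝕜 (fun x (i : s) => F x i) x₀ :=
    differentiableAt_pi.2 fun i => hF i i.2
  obtain ⟨K, hK, hbound⟩ := hrestrict.isBigO_sub.exists_pos
  refine ⟨K, hK, hbound.bound.mono fun x hx i hi => ?_⟩
  rw [norm_sub_rev]
  exact (norm_le_pi_norm _ (⟨i, hi⟩ : s)).trans hx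

theorem exists_eventually_isCharPoly_norm_sub_le (h0 : CoeffDifferentiableAt r0 x₀)
    (h1 : CoeffDifferentiableAt r1 x₀) (he : CoeffDifferentiableAt e x₀)
    (h0m : ∀ x, (r0 x).natDegree ≤ m + 1) (h1m : ∀ x, (r1 x).natDegree ≤ m)
    (hem : ∀ x, (e x).natDegree ≤ m + 1 + m)
    (hlead : ∀ x, (e x).coeff (m + 1 + m) = (r0 x).coeff (m + 1) - (r1 x).coeff m)
    (hcop : IsCoprime (r0 x₀) (r1 x₀)) (hne : (r0 x₀).coeff (m + 1) ≠ 0 ∨ (r1 x₀).coeff m ≠ 0)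
    (ha : ∀ n, 1 ≤ n → n ≤ m → a n ≠ 0) (ham : a (m + 1) = 1)
    (h₀ : IsCharPoly (m + 1) a b (r0 x₀) (r1 x₀) (e x₀)) :
    ∃ K > 0, ∀ᶠ x in 𝓝 x₀, ∃ a' b' : ℕ → ℂ, (∀ n, 1 ≤ n → n ≤ m → a' n ≠ 0) ∧ a' (m + 1) = 1 ∧
      IsCharPoly (m + 1) a' b' (r0 x) (r1 x) (e x) ∧
      (∀ n, 1 ≤ n → n ≤ m + 1 →
        ‖a n - a' n‖ ≤ K * ‖x - x₀‖ ∧ ‖b n - b' n‖ ≤ K * ‖x - x₀‖) ∧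
      ∀ a'' b'' : ℕ → ℂ, a'' (m + 1) = 1 → IsCharPoly (m + 1) a'' b'' (r0 x) (r1 x) (e x) →
        ∀ n, 1 ≤ n → n ≤ m + 1 → a'' n = a' n ∧ b'' n = b' n := by
  obtain ⟨A, B, hA, hB, hAB⟩ :=
    exists_differentiableAt_isCharPoly h0 h1 he h0m h1m hem hlead hcop hne ha h₀
  obtain ⟨_, _, _, huniq₀⟩ := hAB.self_of_nhds
  obtain ⟨K, hK, hlip⟩ := exists_eventually_norm_sub_le_mul (F := fun x n => (A x n, B x n))
    (Finset.Icc 1 (m + 1)) fun n _ => (hA n).prodMk (hB n)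
  refine ⟨K, hK, ?_⟩
  filter_upwards [hAB, hlip] with x ⟨hAne, hAm, hchar, huniq⟩ hx
  refine ⟨A x, B x, hAne, hAm, hchar, fun n hn hnm => ?_, huniq⟩
  obtain ⟨han, hbn⟩ := huniq₀ a b ham h₀ n hn hnm
  rw [han, hbn]
  exact norm_prod_le_iff.1 (hx n (Finset.mem_Icc.2 ⟨hn, hnm⟩))

end CharPoly

/-- The data of the inverse problem, as a point of a normed space: the eigenvalues `λ_j` for
`1 ≤ j ≤ 2 l - 1`, the coefficients of `R_0` (degree at most `l`) and the coefficients of `R_1`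
(degree at most `l - 1`). -/
abbrev SpectralData (l : ℕ) : Type :=
  (Finset.Icc 1 (2 * l - 1) → ℂ) × (Fin (l + 1) → ℂ) × (Fin l → ℂ)

namespace SpectralData

variable {l : ℕ}

/-- The polynomial `R_0`. -/
noncomputable def r0 (x : SpectralData l) : ℂ[X] := ofFn (l + 1) x.2.1

/-- The polynomial `R_1`. -/
noncomputable def r1 (x : SpectralData l) : ℂ[X] := ofFn l x.2.2

/-- The polynomial whose zeros are the prescribed eigenvalues, with the leading coefficient that
the characteristic polynomial `R_0 v_1 - R_1 v_0` must have. -/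
noncomputable def charPoly (x : SpectralData l) : ℂ[X] :=
  C (x.r0.coeff l - x.r1.coeff (l - 1)) * ∏ j, (X - C (x.1 j))

/-- The data with given eigenvalues and polynomials; coefficients beyond the allowed degrees are
discarded. -/
noncomputable def ofPolys (l : ℕ) (Λ : ℕ → ℂ) (R0 R1 : ℂ[X]) : SpectralData l :=
  (fun j => Λ j, toFn (l + 1) R0, toFn l R1)

lemma natDegree_r0_le (x : SpectralData l) : x.r0.natDegree ≤ l :=
  Nat.lt_succ_iff.1 (ofFn_natDegree_lt l.succ_pos _)

lemma natDegree_r1_le (hl : 1 ≤ l) (x : SpectralData l) : x.r1.natDegree ≤ l - 1 :=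
  Nat.le_sub_one_of_lt (ofFn_natDegree_lt hl _)

lemma isMonicOfDegree_prod_X_sub_C (x : SpectralData l) :
    IsMonicOfDegree (∏ j, (X - C (x.1 j))) (2 * l - 1) :=
  ⟨by simp, monic_prod_X_sub_C x.1 Finset.univ⟩

lemma natDegree_charPoly_le (x : SpectralData l) : x.charPoly.natDegree ≤ 2 * l - 1 :=
  (natDegree_C_mul_le _ _).trans_eq x.isMonicOfDegree_prod_X_sub_C.natDegree_eq

lemma coeff_charPoly (x : SpectralData l) :
    x.charPoly.coeff (2 * l - 1) = x.r0.coeff l - x.r1.coeff (l - 1) := by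
  rw [charPoly, coeff_C_mul, ((isMonicOfDegree_iff _ _).1 x.isMonicOfDegree_prod_X_sub_C).2,
    mul_one]

lemma coeffDifferentiableAt_r0 (x₀ : SpectralData l) : CoeffDifferentiableAt r0 x₀ :=
  .ofFn (differentiableAt_id.snd.fst)

lemma coeffDifferentiableAt_r1 (x₀ : SpectralData l) : CoeffDifferentiableAt r1 x₀ :=
  .ofFn (differentiableAt_id.snd.snd)

lemma coeffDifferentiableAt_charPoly (x₀ : SpectralData l) : CoeffDifferentiableAt charPoly x₀ :=
  (CoeffDifferentiableAt.C ((coeffDifferentiableAt_r0 x₀ l).sub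
    (coeffDifferentiableAt_r1 x₀ (l - 1)))).mul <| .prod _ fun j _ =>
      (CoeffDifferentiableAt.const X).sub (.C (differentiableAt_pi.1 differentiableAt_id.fst j))

variable {Λ Λ' : ℕ → ℂ} {R0 R1 R0' R1' : ℂ[X]}

lemma r0_ofPolys (h0 : R0.degree ≤ l) : (ofPolys l Λ R0 R1).r0 = R0 :=
  ((toFn_eq_iff_of_degree_lt (h0.trans_lt (by exact_mod_cast l.lt_succ_self))).1 rfl).symm

lemma r1_ofPolys (hl : 1 ≤ l) (h1 : R1.degree ≤ (l - 1 : ℕ)) : (ofPolys l Λ R0 R1).r1 = R1 :=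
  ((toFn_eq_iff_of_degree_lt (h1.trans_lt (by exact_mod_cast Nat.sub_one_lt_of_le hl le_rfl))).1
    rfl).symm

lemma charPoly_ofPolys (hl : 1 ≤ l) (h0 : R0.degree ≤ l) (h1 : R1.degree ≤ (l - 1 : ℕ)) :
    (ofPolys l Λ R0 R1).charPoly =
      C (R0.coeff l - R1.coeff (l - 1)) * ∏ j ∈ Finset.Icc 1 (2 * l - 1), (X - C (Λ j)) := by
  rw [charPoly, r0_ofPolys h0, r1_ofPolys hl h1]
  congr 1
  exact Finset.prod_coe_sort _ fun j => X - C (Λ j)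

lemma norm_ofPolys_sub_le {δ : ℝ} (hΛ : ∀ j, 1 ≤ j → j ≤ 2 * l - 1 → ‖Λ j - Λ' j‖ ≤ δ)
    (h0 : ∀ n ≤ l, ‖R0.coeff n - R0'.coeff n‖ ≤ δ)
    (h1 : ∀ n ≤ l - 1, ‖R1.coeff n - R1'.coeff n‖ ≤ δ) :
    ‖ofPolys l Λ R0 R1 - ofPolys l Λ' R0' R1'‖ ≤ δ := by
  have hδ : 0 ≤ δ := (norm_nonneg _).trans (h0 0 l.zero_le)
  refine norm_prod_le_iff.2 ⟨?_, norm_prod_le_iff.2 ⟨?_, ?_⟩⟩ <;>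
    refine (pi_norm_le_iff_of_nonneg hδ).2 fun i => ?_
  · exact hΛ i (Finset.mem_Icc.1 i.2).1 (Finset.mem_Icc.1 i.2).2
  · exact h0 i (Nat.lt_succ_iff.1 i.2)
  · exact h1 i (Nat.le_sub_one_of_lt i.2)

end SpectralData

theorem inverse_problem_local_solvability_stability_general (l : ℕ) (hl : 1 ≤ l)
    (R0 R1 : ℂ[X]) (hcop : IsCoprime R0 R1)
    (hR0 : R0.degree ≤ (l : WithBot ℕ)) (hR1 : R1.degree ≤ ((l - 1 : ℕ) : WithBot ℕ))
    (hlead : R0.coeff l ≠ 0 ∨ R1.coeff (l - 1) ≠ 0) (a b : ℕ → ℂ)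
    (ha : ∀ n, 1 ≤ n → n ≤ l - 1 → a n ≠ 0) (hal : a l = 1) (Λ : ℕ → ℂ)
    (hΛ : IsCharPoly l a b R0 R1
      (C (R0.coeff l - R1.coeff (l - 1)) *
        ∏ j ∈ Finset.Icc 1 (2 * l - 1), (X - C (Λ j)))) :
    ∃ ε > (0 : ℝ), ∃ Cst > (0 : ℝ),
      ∀ (Λ' : ℕ → ℂ) (R0' R1' : ℂ[X]) (δ : ℝ),
        R0'.degree ≤ (l : WithBot ℕ) → R1'.degree ≤ ((l - 1 : ℕ) : WithBot ℕ) →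
        δ ≤ ε →
        (∀ j, 1 ≤ j → j ≤ 2 * l - 1 → ‖Λ j - Λ' j‖ ≤ δ) →
        (∀ n, n ≤ l → ‖R0.coeff n - R0'.coeff n‖ ≤ δ) →
        (∀ n, n ≤ l - 1 → ‖R1.coeff n - R1'.coeff n‖ ≤ δ) →
        ∃ a' b' : ℕ → ℂ,
          (∀ n, 1 ≤ n → n ≤ l - 1 → a' n ≠ 0) ∧ a' l = 1 ∧
          IsCharPoly l a' b' R0' R1'
            (C (R0'.coeff l - R1'.coeff (l - 1)) *
              ∏ j ∈ Finset.Icc 1 (2 * l - 1), (X - C (Λ' j))) ∧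
          (∀ n, 1 ≤ n → n ≤ l →
            ‖a n - a' n‖ ≤ Cst * δ ∧ ‖b n - b' n‖ ≤ Cst * δ) ∧
          (∀ a'' b'' : ℕ → ℂ, a'' l = 1 →
            IsCharPoly l a'' b'' R0' R1'
              (C (R0'.coeff l - R1'.coeff (l - 1)) *
                ∏ j ∈ Finset.Icc 1 (2 * l - 1), (X - C (Λ' j))) →
            ∀ n, 1 ≤ n → n ≤ l → a'' n = a' n ∧ b'' n = b' n) := by
  open SpectralData in
  obtain ⟨m, rfl⟩ := Nat.exists_eq_add_of_le' hl
  have hdeg : m + 1 + m = 2 * (m + 1) - 1 := by lia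
  obtain ⟨K, hK, hlocal⟩ := exists_eventually_isCharPoly_norm_sub_le
    (x₀ := ofPolys (m + 1) Λ R0 R1) (coeffDifferentiableAt_r0 _) (coeffDifferentiableAt_r1 _)
    (coeffDifferentiableAt_charPoly _) natDegree_r0_le (natDegree_r1_le hl)
    (fun x => hdeg ▸ natDegree_charPoly_le x) (fun x => hdeg ▸ coeff_charPoly x)
    (by rwa [r0_ofPolys hR0, r1_ofPolys hl hR1]) (by rwa [r0_ofPolys hR0, r1_ofPolys hl hR1])
    ha hal (by rwa [r0_ofPolys hR0, r1_ofPolys hl hR1, charPoly_ofPolys hl hR0 hR1])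
  obtain ⟨ε, hε, hball⟩ := Metric.nhds_basis_closedBall.eventually_iff.1 hlocal
  refine ⟨ε, hε, K, hK, fun Λ' R0' R1' δ hR0' hR1' hδ hΛδ h0δ h1δ => ?_⟩
  have hdist : ‖ofPolys (m + 1) Λ' R0' R1' - ofPolys (m + 1) Λ R0 R1‖ ≤ δ :=
    norm_sub_rev (ofPolys (m + 1) Λ R0 R1) _ ▸ norm_ofPolys_sub_le hΛδ h0δ h1δ
  obtain ⟨a', b', hne, hone, hchar, hbound, huniq⟩ :=
    hball (mem_closedBall_iff_norm.2 (hdist.trans hδ))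
  rw [r0_ofPolys hR0', r1_ofPolys hl hR1', charPoly_ofPolys hl hR0' hR1'] at hchar huniq
  have hKδ := mul_le_mul_of_nonneg_left hdist hK.le
  exact ⟨a', b', hne, hone, hchar,
    fun n hn hnl => (hbound n hn hnl).imp (·.trans hKδ) (·.trans hKδ), huniq⟩

/-- Theorem 3.3: local solvability and stability for the inverse problem with polynomials in
the boundary condition. Small perturbations of the eigenvalues and of the coefficients of the
polynomials `R0`, `R1` still produce a (unique) solvable inverse problem, and the recovered
coefficients differ from the original ones by at most `C δ`. -/
theorem inverse_problem_local_solvability_stability (l : ℕ) (hl : 1 ≤ l)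
    (R0 R1 : Polynomial ℂ)
    (hcop : IsCoprime R0 R1)
    (hR0d : R0.degree = (l : WithBot ℕ)) (hr0 : R0.coeff l ≠ 0)
    (hR1d : R1.degree = ((l - 1 : ℕ) : WithBot ℕ)) (hr1 : R1.coeff (l - 1) ≠ 0)
    (hne : R0.coeff l ≠ R1.coeff (l - 1))
    (a b : ℕ → ℂ)
    (ha : ∀ n, 1 ≤ n → n ≤ l - 1 → a n ≠ 0) (hal : a l = 1)
    (Λ : ℕ → ℂ)
    (hΛ : IsCharPoly l a b R0 R1
      (C (R0.coeff l - R1.coeff (l - 1)) *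
        ∏ j ∈ Finset.Icc 1 (2 * l - 1), (X - C (Λ j)))) :
    ∃ ε > (0 : ℝ), ∃ Cst > (0 : ℝ),
      ∀ (Λ' : ℕ → ℂ) (R0' R1' : Polynomial ℂ) (δ : ℝ),
        R0'.degree ≤ (l : WithBot ℕ) → R1'.degree ≤ ((l - 1 : ℕ) : WithBot ℕ) →
        δ ≤ ε →
        (∀ j, 1 ≤ j → j ≤ 2 * l - 1 → ‖Λ j - Λ' j‖ ≤ δ) →
        (∀ n, n ≤ l → ‖R0.coeff n - R0'.coeff n‖ ≤ δ) →
        (∀ n, n ≤ l - 1 → ‖R1.coeff n - R1'.coeff n‖ ≤ δ) →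
        ∃ a' b' : ℕ → ℂ,
          (∀ n, 1 ≤ n → n ≤ l - 1 → a' n ≠ 0) ∧ a' l = 1 ∧
          IsCharPoly l a' b' R0' R1'
            (C (R0'.coeff l - R1'.coeff (l - 1)) *
              ∏ j ∈ Finset.Icc 1 (2 * l - 1), (X - C (Λ' j))) ∧
          (∀ n, 1 ≤ n → n ≤ l →
            ‖a n - a' n‖ ≤ Cst * δ ∧ ‖b n - b' n‖ ≤ Cst * δ) ∧
          (∀ a'' b'' : ℕ → ℂ,
            (∀ n, 1 ≤ n → n ≤ l - 1 → a'' n ≠ 0) → a'' l = 1 →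
            IsCharPoly l a'' b'' R0' R1'
              (C (R0'.coeff l - R1'.coeff (l - 1)) *
                ∏ j ∈ Finset.Icc 1 (2 * l - 1), (X - C (Λ' j))) →
            ∀ n, 1 ≤ n → n ≤ l → a'' n = a' n ∧ b'' n = b' n) := by
  obtain ⟨ε, hε, K, hK, H⟩ := inverse_problem_local_solvability_stability_general l hl R0 R1 hcop
    hR0d.le hR1d.le (.inl hr0) a b ha hal Λ hΛ
  refine ⟨ε, hε, K, hK, fun Λ' R0' R1' δ hR0' hR1' hδ hΛ' h0 h1 => ?_⟩
  obtain ⟨a', b', hne', hone, hchar, hbound, huniq⟩ := H Λ' R0' R1' δ hR0' hR1' hδ hΛ' h0 h1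
  exact ⟨a', b', hne', hone, hchar, hbound, fun a'' b'' _ => huniq a'' b''⟩
end

section
/- (Theorem 3.4, local solvability and stability for the inverse discrete transmission eigenvalue problem.) Let α_1,…,α_l, β_1,…,β_l, α•_1,…,α•_l, β•_1,…,β•_l be fixed complex numbers with α_n ≠ 0, α•_n ≠ 0 for all n and α_l ≠ α•_l, and let λ_1,…,λ_{2l−1} be the eigenvalues of the corresponding transmission problem. Then there exist ε > 0 and C > 0, depending only on {α_n}, {β_n}, {α•_n}, {β•_n}, such that for any complex numbers λ̃_1,…,λ̃_{2l−1}, α̃•_1,…,α̃•_l, β̃•_1,…,β̃•_l, α̃_l satisfying δ := max_{1 ≤ j ≤ 2l−1} |λ_j − λ̃_j| + max_{1 ≤ n ≤ l} (|α•_n − α̃•_n| + |β•_n − β̃•_n|) + |α_l − α̃_l| ≤ ε, there exist unique complex numbers α̃_1,…,α̃_{l−1} (all nonzero) and β̃_1,…,β̃_l such that λ̃_1,…,λ̃_{2l−1} are the eigenvalues, counted with multiplicity, of the transmission problem with coefficients {α̃_n}, {β̃_n}, {α̃•_n}, {β̃•_n}; moreover |α_n − α̃_n| ≤ Cδ and |β_n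 − β̃_n| ≤ Cδ for n = 1,…,l. -/
open Polynomial

/-- `Λ 1, …, Λ (2l-1)` are the eigenvalues, counted with multiplicity, of the discrete
transmission eigenvalue problem with coefficients `α`, `β`, `α•`, `β•`: the characteristic
polynomial `D = φ l * φ• (l+1) - φ (l+1) * φ• l` (where `φ`, `φ•` are the polynomial
solutions of the corresponding difference equations with `φ 0 = φ• 0 = 0`,
`φ 1 = φ• 1 = 1`) equals `c ∏_{j=1}^{2l-1} (X - Λ j)` for some nonzero constant `c`. -/
def TransmissionEigenvalues (l : ℕ) (α β αs βs Λ : ℕ → ℂ) : Prop :=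
  ∃ φ φs : ℕ → Polynomial ℂ,
    φ 0 = 0 ∧ φ 1 = 1 ∧ φs 0 = 0 ∧ φs 1 = 1 ∧
    (∀ n, 1 ≤ n → n ≤ l →
      C (α n) * φ (n + 1) + C (β n) * φ n + C (α n) * φ (n - 1) = X * φ n) ∧
    (∀ n, 1 ≤ n → n ≤ l →
      C (αs n) * φs (n + 1) + C (βs n) * φs n + C (αs n) * φs (n - 1) = X * φs n) ∧
    ∃ c : ℂ, c ≠ 0 ∧
      φ l * φs (l + 1) - φ (l + 1) * φs l
        = C c * ∏ j ∈ Finset.Icc 1 (2 * l - 1), (X - C (Λ j))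

/-!
Rescaled to be monic, the solutions of the two difference equations satisfy
`α l ψ l ψ• (l+1) - α• l ψ (l+1) ψ• l = (α l - α• l) ∏ (X - Λ j)`. Consecutive monic solutions are
coprime, so, with `ψ•` and `α l` known, this equation has exactly one solution `(ψ l, ψ (l+1))` of
the right degrees, and the Euclidean algorithm recovers the remaining coefficients from it. The
argument works over commutative rings and lifts along local ring homomorphisms. Applied to the ring
of germs of functions `f = x + O(δ)`, with `f ↦ x` as the local homomorphism, it produces perturbed
coefficients that differ from the original ones by `O(δ)`.
-/

open Filter Asymptotics Topology

section CommRing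

variable {R S : Type*} [CommRing R] [CommRing S]

theorem isMonicOfDegree_map [Nontrivial S] (κ : R →+* S) {p : R[X]} {n : ℕ}
    (hp : IsMonicOfDegree p n) : IsMonicOfDegree (p.map κ) n :=
  ⟨(hp.monic.natDegree_map κ).trans hp.natDegree_eq, hp.monic.map κ⟩

theorem coeff_eq_one_of_isMonicOfDegree {p : R[X]} {n : ℕ} (hp : IsMonicOfDegree p n) :
    p.coeff n = 1 := by
  rw [← hp.natDegree_eq, hp.monic.coeff_natDegree]

theorem isMonicOfDegree_prod_X_sub_C [Nontrivial R] {ι : Type*} (s : Finset ι) (x : ι → R) :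
    IsMonicOfDegree (∏ i ∈ s, (X - C (x i))) s.card :=
  ⟨natDegree_finsetProd_X_sub_C_eq_card s x, monic_prod_X_sub_C x s⟩

theorem exists_eq_X_sub_C_mul_sub [Nontrivial R] {P Q : R[X]} {n : ℕ}
    (hP : IsMonicOfDegree P n) (hQ : IsMonicOfDegree Q (n + 1)) :
    ∃ (b : R) (r : R[X]), Q = (X - C b) * P - r ∧ r.degree < n := by
  have hr : (Q %ₘ P).degree < n :=
    (degree_modByMonic_lt Q hP.monic).trans_eq
      ((degree_eq_natDegree hP.ne_zero).trans (by rw [hP.natDegree_eq]))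
  have hr' : (Q %ₘ P).natDegree < n + 1 :=
    Nat.lt_succ_of_le (natDegree_le_of_degree_le hr.le)
  obtain ⟨q, hq, hQq⟩ := hQ.of_dvd_sub n.le_succ hP hr' (dvd_sub_comm.1 (dvd_modByMonic_sub Q P))
  rw [Nat.succ_sub le_rfl, Nat.sub_self] at hq
  obtain ⟨b, rfl⟩ := isMonicOfDegree_one_iff.1 hq
  refine ⟨-b, -(Q %ₘ P), ?_, by rwa [degree_neg]⟩
  rw [C_neg, sub_neg_eq_add, sub_neg_eq_add]
  exact hQq

theorem X_sub_C_mul_sub_inj {P r r' : R[X]} {n : ℕ} {b b' : R} (hP : IsMonicOfDegree P n)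
    (hr : r.degree < n) (hr' : r'.degree < n)
    (h : (X - C b) * P - r = (X - C b') * P - r') : b = b' ∧ r = r' := by
  have hb : b = b' := by
    have hcoeff := congrArg (coeff · n) h
    simpa [sub_mul, coeff_eq_one_of_isMonicOfDegree hP, coeff_eq_zero_of_degree_lt hr,
      coeff_eq_zero_of_degree_lt hr'] using hcoeff
  subst hb
  exact ⟨rfl, sub_right_injective h⟩

theorem exists_isMonicOfDegree_mul_sub_mul [Nontrivial R] {f g D : R[X]} {m n : ℕ} {a s : R}
    (hm : m ≠ 0) (hf : IsMonicOfDegree f m) (hg : IsMonicOfDegree g n)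
    (hD : IsMonicOfDegree D (m + n)) (hfg : IsCoprime f g) (ha : IsUnit a) (hs : IsUnit s) :
    ∃ P Q : R[X], IsMonicOfDegree P n ∧ IsMonicOfDegree Q m ∧
      C a * P * f - C s * Q * g = C (a - s) * D := by
  obtain ⟨u, v, huv⟩ := hfg
  obtain ⟨a', ha'⟩ := ha.exists_right_inv
  obtain ⟨s', hs'⟩ := hs.exists_right_inv
  have haC : C a * C a' = 1 := by rw [← C_mul, ha', C_1]
  have hsC : C s * C s' = 1 := by rw [← C_mul, hs', C_1]
  -- Modulo `f` the equation reads `s Q g = (s - a) D`, and `v` inverts `g` modulo `f`.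
  set Q₀ : R[X] := (1 - C (s' * a)) * (v * D) with hQ₀
  set Q : R[X] := f + Q₀ %ₘ f with hQ_def
  have hf1 : f ≠ 1 := fun h => hm <| by rw [← hf.natDegree_eq, h, natDegree_one]
  have hQ : IsMonicOfDegree Q m := hf.add_right <|
    (natDegree_modByMonic_lt Q₀ hf.monic hf1).trans_eq hf.natDegree_eq
  obtain ⟨P, hP⟩ : f ∣ D + C (a' * s) * (Q * g - D) := by
    refine ⟨C (a' * s) * (1 - Q₀ /ₘ f) * g - (C (a' * s) - 1) * u * D, ?_⟩
    rw [hQ_def, modByMonic_eq_sub_mul_div, hQ₀]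
    simp only [C_mul]
    linear_combination
      (C a' * C s - 1) * D * huv - C a * C a' * v * D * g * hsC - v * D * g * haC
  have hfP : IsMonicOfDegree (f * P) (m + n) := hP ▸ hD.add_right
    ((natDegree_C_mul_le _ _).trans_lt <| (hQ.mul hg).natDegree_sub_lt (by lia) hD)
  refine ⟨P, Q, hf.of_mul_left hfP, hQ, ?_⟩
  rw [C_mul] at hP
  rw [C_sub]
  linear_combination C s * (Q * g - D) * haC - C a * hP

theorem eq_of_mul_sub_mul_eq {f g P P' Q Q' : R[X]} {m : ℕ} {a s : R} (hm : m ≠ 0)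
    (hf : IsMonicOfDegree f m) (hfg : IsCoprime f g) (ha : IsUnit a) (hs : IsUnit s)
    (hQ : IsMonicOfDegree Q m) (hQ' : IsMonicOfDegree Q' m)
    (h : C a * P * f - C s * Q * g = C a * P' * f - C s * Q' * g) : P = P' ∧ Q = Q' := by
  have hdvd : f ∣ Q - Q' := by
    refine ((isCoprime_mul_unit_left_right (isUnit_C.2 hs) f g).2 hfg).dvd_of_dvd_mul_left
      ⟨C a * (P - P'), ?_⟩
    linear_combination -h
  have hQQ' : Q = Q' := by
    by_contra hne
    refine hf.monic.not_dvd_of_natDegree_lt (sub_ne_zero.2 hne) ?_ hdvd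
    exact (hQ.natDegree_sub_lt hm hQ').trans_eq hf.natDegree_eq.symm
  subst hQQ'
  exact ⟨(isUnit_C.2 ha).mul_left_cancel (hf.monic.isRegular.right (sub_left_injective h)), rfl⟩

/-- The polynomial solution `φ` of `α n φ (n+1) + β n φ n + α n φ (n-1) = X φ n`, rescaled to be
monic: `monicSolution α β n = α 1 ⋯ α (n-1) φ n`. The rescaled recurrence involves no division, so
it makes sense for arbitrary coefficients; the value of `α 0` is irrelevant. -/
noncomputable def monicSolution (α β : ℕ → R) : ℕ → R[X]
  | 0 => 0
  | 1 => 1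
  | n + 2 => (X - C (β (n + 1))) * monicSolution α β (n + 1)
      - C (α (n + 1) * α n) * monicSolution α β n

theorem monicSolution_add_two (α β : ℕ → R) (n : ℕ) :
    monicSolution α β (n + 2) = (X - C (β (n + 1))) * monicSolution α β (n + 1)
      - C (α (n + 1) * α n) * monicSolution α β n := by
  rw [monicSolution]

theorem map_monicSolution (κ : R →+* S) (α β : ℕ → R) (n : ℕ) :
    (monicSolution α β n).map κ = monicSolution (fun i => κ (α i)) (fun i => κ (β i)) n := by
  induction n using Nat.twoStepInduction with
  | zero => simp [monicSolution]
  | one => simp [monicSolution]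
  | more n ih₀ ih₁ => simp [monicSolution_add_two, ih₀, ih₁]

theorem monicSolution_congr {α β α' β' : ℕ → R} {n : ℕ}
    (h : ∀ i, 1 ≤ i → i < n → α i = α' i ∧ β i = β' i) :
    monicSolution α β n = monicSolution α' β' n := by
  induction n using Nat.twoStepInduction with
  | zero => simp only [monicSolution]
  | one => simp only [monicSolution]
  | more n ih₀ ih₁ =>
    have hlow : C (α n) * monicSolution α β n = C (α' n) * monicSolution α' β' n := by
      rcases n with _ | n
      · simp [monicSolution]
      · rw [ih₀ fun i h₁ hi => h i h₁ (by lia), (h (n + 1) (by lia) (by lia)).1]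
    have hn := h (n + 1) (by lia) (by lia)
    rw [monicSolution_add_two, monicSolution_add_two, ih₁ fun i h₁ hi => h i h₁ (by lia), C_mul,
      C_mul, mul_assoc, mul_assoc, hlow, hn.1, hn.2]

theorem isMonicOfDegree_monicSolution [Nontrivial R] (α β : ℕ → R) (n : ℕ) :
    IsMonicOfDegree (monicSolution α β (n + 1)) n := by
  induction n using Nat.twoStepInduction with
  | zero => simp [monicSolution]
  | one => simpa [monicSolution] using isMonicOfDegree_X_sub_one (β 1)
  | more n ih₀ ih₁ =>
    have hmul : IsMonicOfDegree ((X - C (β (n + 2))) * monicSolution α β (n + 2)) (1 + (n + 1)) :=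
      (isMonicOfDegree_X_sub_one (β (n + 2))).mul ih₁
    rw [add_comm 1] at hmul
    have hlow : (C (α (n + 2) * α (n + 1)) * monicSolution α β (n + 1)).natDegree ≤ n :=
      (natDegree_C_mul_le _ _).trans_eq ih₀.natDegree_eq
    rw [monicSolution_add_two]
    exact hmul.sub (hlow.trans_lt (by lia))

theorem degree_C_mul_monicSolution_lt [Nontrivial R] (α β : ℕ → R) (c : R) (n : ℕ) :
    (C c * monicSolution α β n).degree < n := by
  rcases n with _ | n
  · simp [monicSolution]
  · refine degree_le_natDegree.trans_lt (Nat.cast_lt.2 ((natDegree_C_mul_le _ _).trans_lt ?_))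
    rw [(isMonicOfDegree_monicSolution α β n).natDegree_eq]
    exact n.lt_succ_self

theorem isCoprime_monicSolution_succ {α : ℕ → R} (β : ℕ → R) {n : ℕ}
    (hα : ∀ i, 1 ≤ i → i ≤ n → IsUnit (α i)) :
    IsCoprime (monicSolution α β (n + 1)) (monicSolution α β n) := by
  induction n with
  | zero => simpa [monicSolution] using isCoprime_one_left
  | succ n ih =>
    rcases n with _ | n
    · simpa [monicSolution] using isCoprime_one_right
    have hunit : IsUnit (C (α (n + 2) * α (n + 1))) :=
      isUnit_C.2 ((hα _ (by lia) (by lia)).mul (hα _ (by lia) (by lia)))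
    have hrest : IsCoprime (-(C (α (n + 2) * α (n + 1)) * monicSolution α β (n + 1)))
        (monicSolution α β (n + 2)) :=
      ((isCoprime_mul_unit_left_left hunit _ _).2
        (ih fun i h₁ hi => hα i h₁ (by lia)).symm).neg_left
    rw [monicSolution_add_two, ← neg_add_eq_sub]
    exact hrest.add_mul_right_left _

theorem eq_of_monicSolution_eq [Nontrivial R] {α β α' β' : ℕ → R} {m : ℕ}
    (hα : ∀ i, 1 ≤ i → i ≤ m + 1 → IsUnit (α i)) (htop : α (m + 1) = α' (m + 1))
    (h₁ : monicSolution α β (m + 1) = monicSolution α' β' (m + 1))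
    (h₂ : monicSolution α β (m + 2) = monicSolution α' β' (m + 2)) :
    ∀ i, 1 ≤ i → i ≤ m + 1 → α i = α' i ∧ β i = β' i := by
  induction m with
  | zero =>
    intro i hi hi'
    obtain rfl : i = 1 := by lia
    exact ⟨htop, by simpa [monicSolution] using h₂⟩
  | succ m ih =>
    rw [monicSolution_add_two, monicSolution_add_two α' β', ← h₁] at h₂
    obtain ⟨hβ, hrest⟩ := X_sub_C_mul_sub_inj (isMonicOfDegree_monicSolution α β (m + 1))
      (degree_C_mul_monicSolution_lt α β _ _) (degree_C_mul_monicSolution_lt α' β' _ _) h₂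
    have hγ : α (m + 2) * α (m + 1) = α' (m + 2) * α' (m + 1) := by
      simpa only [coeff_C_mul, mul_one,
        coeff_eq_one_of_isMonicOfDegree (isMonicOfDegree_monicSolution _ _ m)]
        using congrArg (coeff · m) hrest
    have hunit₂ : IsUnit (α (m + 2)) := hα _ (by lia) (by lia)
    have hunit₁ : IsUnit (α (m + 1)) := hα _ (by lia) (by lia)
    have h₀ : monicSolution α β (m + 1) = monicSolution α' β' (m + 1) :=
      (isUnit_C.2 (hunit₂.mul hunit₁)).mul_left_cancel (by rwa [← hγ] at hrest)
    have htop' : α (m + 1) = α' (m + 1) := hunit₂.mul_left_cancel (by rwa [← htop] at hγ)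
    intro i hi hi'
    rcases hi'.lt_or_eq with hlt | rfl
    · exact ih (fun j hj hj' => hα j hj (by lia)) htop' h₀ h₁ i hi (by lia)
    · exact ⟨htop, hβ⟩

theorem exists_recurrence_of_map_eq_monicSolution [Nontrivial S] (κ : R →+* S) [IsLocalHom κ]
    {α β : ℕ → S} {m : ℕ} (hα₁ : IsUnit (α (m + 1))) (hα₂ : IsUnit (α (m + 2)))
    {P Q : R[X]} {a : R} (hP : IsMonicOfDegree P (m + 1)) (hQ : IsMonicOfDegree Q (m + 2))
    (hPκ : P.map κ = monicSolution α β (m + 2)) (hQκ : Q.map κ = monicSolution α β (m + 3))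
    (ha : κ a = α (m + 2)) :
    ∃ (p : R[X]) (a₁ b : R), IsMonicOfDegree p m ∧ p.map κ = monicSolution α β (m + 1) ∧
      κ a₁ = α (m + 1) ∧ Q = (X - C b) * P - C (a * a₁) * p := by
  have : Nontrivial R := κ.domain_nontrivial
  obtain ⟨b, r, rfl, hr⟩ := exists_eq_X_sub_C_mul_sub hP hQ
  have hrκ : r.map κ = C (α (m + 2) * α (m + 1)) * monicSolution α β (m + 1) := by
    refine (X_sub_C_mul_sub_inj (b := κ b) (b' := β (m + 2))
      (isMonicOfDegree_monicSolution α β (m + 1)) (degree_map_le.trans_lt hr)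
      (degree_C_mul_monicSolution_lt α β _ _) ?_).2
    rw [← monicSolution_add_two, ← hQκ, ← hPκ]
    simp only [Polynomial.map_sub, Polynomial.map_mul, map_X, map_C]
  -- The leading coefficient of the remainder is a unit because its image under `κ` is one.
  have hγκ : κ (r.coeff m) = α (m + 2) * α (m + 1) := by
    rw [← coeff_map, hrκ, coeff_C_mul,
      coeff_eq_one_of_isMonicOfDegree (isMonicOfDegree_monicSolution α β m), mul_one]
  obtain ⟨γ', hγ'⟩ : ∃ γ', r.coeff m * γ' = 1 :=
    (isUnit_of_map_unit κ _ (hγκ ▸ hα₂.mul hα₁)).exists_right_inv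
  obtain ⟨a', ha'⟩ : ∃ a', a * a' = 1 := (isUnit_of_map_unit κ _ (ha ▸ hα₂)).exists_right_inv
  have hr_natDegree : r.natDegree ≤ m := natDegree_le_iff_coeff_eq_zero.2 fun N hN =>
    coeff_eq_zero_of_degree_lt (hr.trans_le (Nat.cast_le.2 hN))
  refine ⟨C γ' * r, a' * r.coeff m, b, ?_, ?_, ?_, ?_⟩
  · exact (isMonicOfDegree_iff _ _).2
      ⟨(natDegree_C_mul_le _ _).trans hr_natDegree, by rw [coeff_C_mul, mul_comm, hγ']⟩
  · rw [Polynomial.map_mul, map_C, hrκ, ← mul_assoc, ← C_mul, ← hγκ, ← map_mul, mul_comm γ', hγ',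
      map_one, C_1, one_mul]
  · rw [map_mul, hγκ, ← ha, ← mul_assoc, ← map_mul, mul_comm a', ha', map_one, one_mul]
  · rw [← mul_assoc, ← C_mul, ← mul_assoc, ha', one_mul, hγ', C_1, one_mul]

theorem exists_monicSolution_eq_of_map_eq [Nontrivial S] (κ : R →+* S) [IsLocalHom κ]
    {α β : ℕ → S} {m : ℕ} (hα : ∀ i, 1 ≤ i → i ≤ m + 1 → IsUnit (α i)) {P Q : R[X]} {a : R}
    (hP : IsMonicOfDegree P m) (hQ : IsMonicOfDegree Q (m + 1))
    (hPκ : P.map κ = monicSolution α β (m + 1)) (hQκ : Q.map κ = monicSolution α β (m + 2))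
    (ha : κ a = α (m + 1)) :
    ∃ α' β' : ℕ → R, α' (m + 1) = a ∧
      monicSolution α' β' (m + 1) = P ∧ monicSolution α' β' (m + 2) = Q := by
  have : Nontrivial R := κ.domain_nontrivial
  induction m generalizing P Q a with
  | zero =>
    obtain ⟨b, rfl⟩ := isMonicOfDegree_one_iff.1 hQ
    exact ⟨fun _ => a, fun _ => -b, rfl, by simp [monicSolution, isMonicOfDegree_zero_iff.1 hP],
      by simp [monicSolution]⟩
  | succ m ih =>
    obtain ⟨p, a₁, b, hp, hpκ, ha₁, rfl⟩ := exists_recurrence_of_map_eq_monicSolution κ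
      (hα _ (by lia) (by lia)) (hα _ (by lia) (by lia)) hP hQ hPκ hQκ ha
    obtain ⟨α', β', rfl, rfl, rfl⟩ :=
      ih (fun i hi hi' => hα i hi (by lia)) hp hP hpκ hPκ ha₁
    have hcongr : ∀ n ≤ m + 2,
        monicSolution (Function.update α' (m + 2) a) (Function.update β' (m + 2) b) n
          = monicSolution α' β' n := fun n hn =>
      monicSolution_congr fun i _ hi => by simp [(hi.trans_le hn).ne]
    refine ⟨Function.update α' (m + 2) a, Function.update β' (m + 2) b, by simp,
      hcongr _ le_rfl, ?_⟩
    rw [monicSolution_add_two, hcongr _ le_rfl, hcongr _ (by lia)]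
    simp

/-- The polynomials `φ 0, …, φ (l + 1)` solve the difference equation
`α n φ (n+1) + β n φ n + α n φ (n-1) = X φ n`, `1 ≤ n ≤ l`, with `φ 0 = 0` and `φ 1 = 1`. -/
structure IsPolynomialSolution (l : ℕ) (α β : ℕ → R) (φ : ℕ → R[X]) : Prop where
  zero : φ 0 = 0
  one : φ 1 = 1
  recurrence : ∀ n, 1 ≤ n → n ≤ l →
    C (α n) * φ (n + 1) + C (β n) * φ n + C (α n) * φ (n - 1) = X * φ n

namespace IsPolynomialSolution

variable {l : ℕ} {α β : ℕ → R} {φ : ℕ → R[X]}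

theorem C_prod_mul_eq_monicSolution (hφ : IsPolynomialSolution l α β φ) {n : ℕ} (hn : n ≤ l) :
    C (∏ i ∈ Finset.range n, α (i + 1)) * φ (n + 1) = monicSolution α β (n + 1) := by
  induction n using Nat.twoStepInduction with
  | zero => simp [monicSolution, hφ.one]
  | one =>
    have hrec := hφ.recurrence 1 le_rfl hn
    simp only [hφ.zero, hφ.one, tsub_self] at hrec
    simp only [monicSolution, Finset.prod_range_one]
    linear_combination hrec
  | more n ih₀ ih₁ =>
    have hrec := hφ.recurrence (n + 2) (by lia) hn
    rw [Nat.add_sub_cancel_right (n + 1) 1] at hrec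
    rw [monicSolution_add_two, ← ih₁ (by lia), ← ih₀ (by lia)]
    simp only [Finset.prod_range_succ, C_mul]
    linear_combination C (∏ i ∈ Finset.range n, α (i + 1)) * C (α (n + 1)) * hrec

theorem isUnit_of_le [Nontrivial R] (hφ : IsPolynomialSolution l α β φ) {n : ℕ} (h₁ : 1 ≤ n)
    (hn : n ≤ l) : IsUnit (α n) := by
  have hprod : (∏ i ∈ Finset.range l, α (i + 1)) * (φ (l + 1)).coeff l = 1 := by
    rw [← coeff_C_mul, hφ.C_prod_mul_eq_monicSolution le_rfl,
      coeff_eq_one_of_isMonicOfDegree (isMonicOfDegree_monicSolution α β l)]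
  have hmem : n - 1 ∈ Finset.range l := Finset.mem_range.2 (by lia)
  have hdvd := Finset.dvd_prod_of_mem (fun i => α (i + 1)) hmem
  rw [Nat.sub_add_cancel h₁] at hdvd
  exact isUnit_of_dvd_one (hdvd.trans (Dvd.intro _ hprod))

end IsPolynomialSolution

theorem exists_isPolynomialSolution {l : ℕ} {α : ℕ → R} (β : ℕ → R)
    (hα : ∀ n, 1 ≤ n → n ≤ l → IsUnit (α n)) : ∃ φ, IsPolynomialSolution l α β φ := by
  set w : ℕ → R := fun n => Ring.inverse (∏ i ∈ Finset.range n, α (i + 1))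
  have hw : ∀ n < l, α (n + 1) * w (n + 1) = w n := fun n hn => by
    simp only [w, Finset.prod_range_succ]
    rw [Ring.mul_inverse_rev, ← mul_assoc, Ring.mul_inverse_cancel _ (hα _ (by lia) hn), one_mul]
  refine ⟨fun n => C (w (n - 1)) * monicSolution α β n, ?_, ?_, ?_⟩
  · simp [monicSolution]
  · simp [w, monicSolution]
  · rintro (_ | n) h₁ hn
    · contradiction
    have hlow : C (w (n - 1)) * monicSolution α β n
        = C (w n) * (C (α n) * monicSolution α β n) := by
      rcases n with _ | n
      · simp [monicSolution]
      · rw [← mul_assoc, ← C_mul, mul_comm (w (n + 1)), hw n (by lia), Nat.add_sub_cancel]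
    simp only [Nat.add_sub_cancel, hlow, ← hw n hn, monicSolution_add_two, C_mul]
    ring

/-- `Λ 1, …, Λ (2l-1)` is the spectrum of the discrete transmission eigenvalue problem. A
characteristic polynomial with a non-invertible leading coefficient has no spectrum in this sense;
over a field, `IsUnit c` means `c ≠ 0`. -/
def IsTransmissionSpectrum (l : ℕ) (α β αs βs Λ : ℕ → R) : Prop :=
  ∃ φ φs : ℕ → R[X], IsPolynomialSolution l α β φ ∧ IsPolynomialSolution l αs βs φs ∧
    ∃ c : R, IsUnit c ∧ φ l * φs (l + 1) - φ (l + 1) * φs l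
      = C c * ∏ j ∈ Finset.Icc 1 (2 * l - 1), (X - C (Λ j))

/-- The transmission problem with `l = m + 1`, in terms of the monic solutions: the equation to be
solved for `monicSolution α β (m + 1)` and `monicSolution α β (m + 2)`. -/
def MonicTransmissionEquation (m : ℕ) (α β αs βs Λ : ℕ → R) : Prop :=
  C (α (m + 1)) * monicSolution α β (m + 1) * monicSolution αs βs (m + 2)
      - C (αs (m + 1)) * monicSolution α β (m + 2) * monicSolution αs βs (m + 1)
    = C (α (m + 1) - αs (m + 1)) * ∏ j ∈ Finset.Icc 1 (2 * (m + 1) - 1), (X - C (Λ j))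

theorem isMonicOfDegree_prod_Icc_X_sub_C [Nontrivial R] (m : ℕ) (Λ : ℕ → R) :
    IsMonicOfDegree (∏ j ∈ Finset.Icc 1 (2 * (m + 1) - 1), (X - C (Λ j))) (m + 1 + m) := by
  have hcard : (Finset.Icc 1 (2 * (m + 1) - 1)).card = m + 1 + m := by
    rw [Nat.card_Icc]
    lia
  exact hcard ▸ isMonicOfDegree_prod_X_sub_C _ Λ

theorem IsPolynomialSolution.mul_sub_mul_eq {m : ℕ} {α β αs βs : ℕ → R} {φ φs : ℕ → R[X]}
    (hφ : IsPolynomialSolution (m + 1) α β φ) (hφs : IsPolynomialSolution (m + 1) αs βs φs) :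
    C (α (m + 1)) * monicSolution α β (m + 1) * monicSolution αs βs (m + 2)
        - C (αs (m + 1)) * monicSolution α β (m + 2) * monicSolution αs βs (m + 1)
      = C ((∏ i ∈ Finset.range (m + 1), α (i + 1)) * ∏ i ∈ Finset.range (m + 1), αs (i + 1))
        * (φ (m + 1) * φs (m + 2) - φ (m + 2) * φs (m + 1)) := by
  rw [← hφ.C_prod_mul_eq_monicSolution m.le_succ, ← hφ.C_prod_mul_eq_monicSolution le_rfl,
    ← hφs.C_prod_mul_eq_monicSolution m.le_succ, ← hφs.C_prod_mul_eq_monicSolution le_rfl]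
  simp only [Finset.prod_range_succ, C_mul]
  ring

theorem coeff_mul_sub_mul_monicSolution [Nontrivial R] (m : ℕ) (a s : R) (α β αs βs : ℕ → R) :
    (C a * monicSolution α β (m + 1) * monicSolution αs βs (m + 2)
      - C s * monicSolution α β (m + 2) * monicSolution αs βs (m + 1)).coeff (m + 1 + m)
      = a - s := by
  have h₁ := (isMonicOfDegree_monicSolution αs βs (m + 1)).mul (isMonicOfDegree_monicSolution α β m)
  have h₂ := (isMonicOfDegree_monicSolution α β (m + 1)).mul (isMonicOfDegree_monicSolution αs βs m)
  rw [mul_comm] at h₁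
  rw [mul_assoc, mul_assoc, coeff_sub, coeff_C_mul, coeff_C_mul,
    coeff_eq_one_of_isMonicOfDegree h₁, coeff_eq_one_of_isMonicOfDegree h₂, mul_one, mul_one]

theorem IsTransmissionSpectrum.pos [Nontrivial R] {l : ℕ} {α β αs βs Λ : ℕ → R}
    (h : IsTransmissionSpectrum l α β αs βs Λ) : 0 < l := by
  rw [pos_iff_ne_zero]
  rintro rfl
  obtain ⟨φ, φs, hφ, hφs, c, hc, hD⟩ := h
  exact hc.ne_zero (by simpa [hφ.zero, hφs.zero] using hD.symm)

theorem isTransmissionSpectrum_succ_iff [Nontrivial R] {m : ℕ} {α β αs βs Λ : ℕ → R} :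
    IsTransmissionSpectrum (m + 1) α β αs βs Λ ↔
      (∀ n, 1 ≤ n → n ≤ m + 1 → IsUnit (α n)) ∧ (∀ n, 1 ≤ n → n ≤ m + 1 → IsUnit (αs n)) ∧
        IsUnit (α (m + 1) - αs (m + 1)) ∧ MonicTransmissionEquation m α β αs βs Λ := by
  set W := (∏ i ∈ Finset.range (m + 1), α (i + 1)) * ∏ i ∈ Finset.range (m + 1), αs (i + 1)
    with hW_def
  have isUnit_W (hα : ∀ n, 1 ≤ n → n ≤ m + 1 → IsUnit (α n))
      (hαs : ∀ n, 1 ≤ n → n ≤ m + 1 → IsUnit (αs n)) : IsUnit W :=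
    (IsUnit.prod_iff.2 fun i hi => hα _ (by lia) (by simpa using hi)).mul
      (IsUnit.prod_iff.2 fun i hi => hαs _ (by lia) (by simpa using hi))
  constructor
  · rintro ⟨φ, φs, hφ, hφs, c, hc, hD⟩
    have hα : ∀ n, 1 ≤ n → n ≤ m + 1 → IsUnit (α n) := fun n => hφ.isUnit_of_le
    have hαs : ∀ n, 1 ≤ n → n ≤ m + 1 → IsUnit (αs n) := fun n => hφs.isUnit_of_le
    have hWc := hφ.mul_sub_mul_eq hφs
    rw [hD, ← mul_assoc, ← C_mul, ← hW_def] at hWc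
    have hlead : α (m + 1) - αs (m + 1) = W * c := by
      rw [← coeff_mul_sub_mul_monicSolution m _ _ α β αs βs, hWc, coeff_C_mul,
        coeff_eq_one_of_isMonicOfDegree (isMonicOfDegree_prod_Icc_X_sub_C m Λ), mul_one]
    exact ⟨hα, hαs, hlead ▸ (isUnit_W hα hαs).mul hc, by rwa [MonicTransmissionEquation, hlead]⟩
  · rintro ⟨hα, hαs, hne, heq⟩
    obtain ⟨φ, hφ⟩ := exists_isPolynomialSolution β hα
    obtain ⟨φs, hφs⟩ := exists_isPolynomialSolution βs hαs
    have hW := isUnit_W hα hαs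
    obtain ⟨c, hc⟩ : W ∣ α (m + 1) - αs (m + 1) := hW.dvd
    refine ⟨φ, φs, hφ, hφs, c, isUnit_of_mul_isUnit_right (hc ▸ hne), ?_⟩
    refine (isUnit_C.2 hW).mul_left_cancel ?_
    rw [← mul_assoc, ← C_mul, ← hc, ← heq, hφ.mul_sub_mul_eq hφs]

namespace MonicTransmissionEquation

variable {m : ℕ} {α β αs βs Λ : ℕ → R}

theorem map (κ : R →+* S) (h : MonicTransmissionEquation m α β αs βs Λ) :
    MonicTransmissionEquation m (fun n => κ (α n)) (fun n => κ (β n)) (fun n => κ (αs n))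
      (fun n => κ (βs n)) (fun j => κ (Λ j)) := by
  simpa [MonicTransmissionEquation, Polynomial.map_prod, map_monicSolution]
    using congrArg (Polynomial.map κ) h

theorem congr_right {αs' βs' Λ' : ℕ → R} (h : MonicTransmissionEquation m α β αs βs Λ)
    (hs : ∀ n, 1 ≤ n → n ≤ m + 1 → αs n = αs' n ∧ βs n = βs' n)
    (hΛ : ∀ j, 1 ≤ j → j ≤ 2 * (m + 1) - 1 → Λ j = Λ' j) :
    MonicTransmissionEquation m α β αs' βs' Λ' := by
  have hprod : ∏ j ∈ Finset.Icc 1 (2 * (m + 1) - 1), (X - C (Λ j))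
      = ∏ j ∈ Finset.Icc 1 (2 * (m + 1) - 1), (X - C (Λ' j)) :=
    Finset.prod_congr rfl fun j hj => by
      rw [hΛ j (Finset.mem_Icc.1 hj).1 (Finset.mem_Icc.1 hj).2]
  rw [MonicTransmissionEquation, hprod, (hs (m + 1) (by lia) le_rfl).1,
    monicSolution_congr fun i h₁ hi => hs i h₁ (by lia),
    monicSolution_congr fun i h₁ hi => hs i h₁ (by lia)] at h
  exact h

theorem unique [Nontrivial R] {α' β' : ℕ → R} (hα : ∀ n, 1 ≤ n → n ≤ m + 1 → IsUnit (α n))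
    (hαs : ∀ n, 1 ≤ n → n ≤ m + 1 → IsUnit (αs n)) (htop : α (m + 1) = α' (m + 1))
    (h : MonicTransmissionEquation m α β αs βs Λ)
    (h' : MonicTransmissionEquation m α' β' αs βs Λ) :
    ∀ n, 1 ≤ n → n ≤ m + 1 → α n = α' n ∧ β n = β' n := by
  unfold MonicTransmissionEquation at h h'
  rw [← htop] at h'
  obtain ⟨h₁, h₂⟩ := eq_of_mul_sub_mul_eq m.succ_ne_zero
    (isMonicOfDegree_monicSolution αs βs (m + 1)) (isCoprime_monicSolution_succ βs hαs)
    (hα _ (by lia) le_rfl) (hαs _ (by lia) le_rfl) (isMonicOfDegree_monicSolution α β (m + 1))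
    (isMonicOfDegree_monicSolution α' β' (m + 1)) (h.trans h'.symm)
  exact eq_of_monicSolution_eq hα htop h₁ h₂

theorem exists_lift [Nontrivial S] (κ : R →+* S) [IsLocalHom κ] {α β αs₀ βs₀ Λ₀ : ℕ → S}
    (hα : ∀ n, 1 ≤ n → n ≤ m + 1 → IsUnit (α n))
    (hαs : ∀ n, 1 ≤ n → n ≤ m + 1 → IsUnit (αs₀ n))
    (h : MonicTransmissionEquation m α β αs₀ βs₀ Λ₀) {a : R} (ha : κ a = α (m + 1))
    (hs : ∀ n, 1 ≤ n → n ≤ m + 1 → κ (αs n) = αs₀ n ∧ κ (βs n) = βs₀ n)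
    (hΛ : ∀ j, 1 ≤ j → j ≤ 2 * (m + 1) - 1 → κ (Λ j) = Λ₀ j) :
    ∃ α' β' : ℕ → R, α' (m + 1) = a ∧ MonicTransmissionEquation m α' β' αs βs Λ ∧
      ∀ n, 1 ≤ n → n ≤ m + 1 → κ (α' n) = α n ∧ κ (β' n) = β n := by
  have : Nontrivial R := κ.domain_nontrivial
  have isUnit_of_map {x : R} {y : S} (hxy : κ x = y) (hy : IsUnit y) : IsUnit x :=
    isUnit_of_map_unit κ x (hxy ▸ hy)
  have hαsR : ∀ n, 1 ≤ n → n ≤ m + 1 → IsUnit (αs n) := fun n h₁ hn =>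
    isUnit_of_map (hs n h₁ hn).1 (hαs n h₁ hn)
  obtain ⟨P, Q, hP, hQ, hPQ⟩ := exists_isMonicOfDegree_mul_sub_mul m.succ_ne_zero
    (isMonicOfDegree_monicSolution αs βs (m + 1)) (isMonicOfDegree_monicSolution αs βs m)
    (isMonicOfDegree_prod_Icc_X_sub_C m Λ) (isCoprime_monicSolution_succ βs hαsR)
    (isUnit_of_map ha (hα _ (by lia) le_rfl)) (hαsR _ (by lia) le_rfl)
  have hS : MonicTransmissionEquation m α β (fun n => κ (αs n)) (fun n => κ (βs n))
      (fun j => κ (Λ j)) :=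
    h.congr_right (fun n h₁ hn => ⟨(hs n h₁ hn).1.symm, (hs n h₁ hn).2.symm⟩)
      fun j h₁ hj => (hΛ j h₁ hj).symm
  have hαsS : ∀ n, 1 ≤ n → n ≤ m + 1 → IsUnit (κ (αs n)) := fun n h₁ hn => (hαsR n h₁ hn).map κ
  have hPQκ := congrArg (Polynomial.map κ) hPQ
  simp only [Polynomial.map_sub, Polynomial.map_mul, Polynomial.map_prod, map_X, map_C,
    map_monicSolution, map_sub κ, ha] at hPQκ
  obtain ⟨hPκ, hQκ⟩ := eq_of_mul_sub_mul_eq m.succ_ne_zero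
    (isMonicOfDegree_monicSolution (fun n => κ (αs n)) (fun n => κ (βs n)) (m + 1))
    (isCoprime_monicSolution_succ _ hαsS) (hα _ (by lia) le_rfl) (hαsS _ (by lia) le_rfl)
    (isMonicOfDegree_map κ hQ) (isMonicOfDegree_monicSolution α β (m + 1)) (hPQκ.trans hS.symm)
  obtain ⟨α', β', rfl, rfl, rfl⟩ :=
    exists_monicSolution_eq_of_map_eq κ hα hP hQ hPκ hQκ ha
  refine ⟨α', β', rfl, hPQ, fun n h₁ hn => ?_⟩
  obtain ⟨hαn, hβn⟩ := hS.unique hα hαsS ha.symm (map κ hPQ) n h₁ hn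
  exact ⟨hαn.symm, hβn.symm⟩

end MonicTransmissionEquation

theorem IsTransmissionSpectrum.ne_zero [Nontrivial R] {l : ℕ} {α β αs βs Λ : ℕ → R}
    (h : IsTransmissionSpectrum l α β αs βs Λ) {n : ℕ} (h₁ : 1 ≤ n) (hn : n ≤ l) : α n ≠ 0 :=
  have ⟨_, _, hφ, _⟩ := h
  (hφ.isUnit_of_le h₁ hn).ne_zero

theorem IsTransmissionSpectrum.unique [Nontrivial R] {l : ℕ} {α β α' β' αs βs Λ : ℕ → R}
    (h : IsTransmissionSpectrum l α β αs βs Λ) (h' : IsTransmissionSpectrum l α' β' αs βs Λ)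
    (htop : α l = α' l) : ∀ n, 1 ≤ n → n ≤ l → α n = α' n ∧ β n = β' n := by
  obtain ⟨m, rfl⟩ := Nat.exists_eq_add_one_of_ne_zero h.pos.ne'
  obtain ⟨hα, hαs, -, heq⟩ := isTransmissionSpectrum_succ_iff.1 h
  exact heq.unique hα hαs htop (isTransmissionSpectrum_succ_iff.1 h').2.2.2

end CommRing

section BigOGerm

variable {T 𝕜 : Type*} [NormedField 𝕜] {F : Filter T} {δ : T → ℝ}

theorem tendsto_of_sub_isBigO (hδ : Tendsto δ F (𝓝 0)) {f : T → 𝕜} {x : 𝕜}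
    (hf : (fun t => x - f t) =O[F] δ) : Tendsto f F (𝓝 x) := by
  simpa using tendsto_const_nhds (x := x).sub (hf.trans_tendsto hδ)

theorem inv_sub_inv_isBigO (hδ : Tendsto δ F (𝓝 0)) {f : T → 𝕜} {x : 𝕜} (hx : x ≠ 0)
    (hf : (fun t => x - f t) =O[F] δ) : (fun t => x⁻¹ - (f t)⁻¹) =O[F] δ := by
  have hlim := tendsto_of_sub_isBigO hδ hf
  have hfactor : (fun t => -(x⁻¹ * (f t)⁻¹)) =O[F] fun _ => (1 : ℝ) :=
    (((hlim.inv₀ hx).const_mul x⁻¹).neg).isBigO_one ℝ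
  refine (hfactor.mul hf).congr' ?_ (.of_forall fun t => one_mul _)
  filter_upwards [hlim.eventually_ne hx] with t ht
  field_simp
  ring

/-- The ring of functions `f` with `f = x + O(δ)` for some constant `x`, each taken as the pair of
its germ along `F` and `x`. Recording `x` makes the limit a function of the element even when `F`
is trivial. -/
def bigOGerm (𝕜 : Type*) [NormedField 𝕜] (hδ : Tendsto δ F (𝓝 0)) :
    Subring (Germ F 𝕜 × 𝕜) where
  carrier := {p | ∃ f : T → 𝕜, (f : Germ F 𝕜) = p.1 ∧ (fun t => p.2 - f t) =O[F] δ}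
  zero_mem' := ⟨0, rfl, by simpa using isBigO_zero δ F⟩
  one_mem' := ⟨1, rfl, by simpa using isBigO_zero δ F⟩
  add_mem' := by
    rintro ⟨_, x⟩ ⟨_, y⟩ ⟨f, rfl, hf⟩ ⟨g, rfl, hg⟩
    exact ⟨f + g, rfl, (hf.add hg).congr_left fun t => (add_sub_add_comm _ _ _ _).symm⟩
  neg_mem' := by
    rintro ⟨_, x⟩ ⟨f, rfl, hf⟩
    exact ⟨-f, rfl, hf.neg_left.congr_left fun t => neg_sub' _ _⟩
  mul_mem' := by
    rintro ⟨_, x⟩ ⟨_, y⟩ ⟨f, rfl, hf⟩ ⟨g, rfl, hg⟩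
    have hg_one : g =O[F] fun _ => (1 : ℝ) := (tendsto_of_sub_isBigO hδ hg).isBigO_one ℝ
    have hfg : (fun t => (x - f t) * g t) =O[F] δ :=
      (hf.mul hg_one).congr_right fun t => mul_one _
    refine ⟨f * g, rfl, ((hg.const_mul_left x).add hfg).congr_left fun t => ?_⟩
    simp only [Pi.mul_apply, Prod.mk_mul_mk]
    ring

namespace bigOGerm

variable (hδ : Tendsto δ F (𝓝 0))

/-- The germ of an element `f = x + O(δ)`. -/
def germ : bigOGerm 𝕜 hδ →+* Germ F 𝕜 :=
  (RingHom.fst (Germ F 𝕜) 𝕜).comp (bigOGerm 𝕜 hδ).subtype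

/-- The constant `x` of an element `f = x + O(δ)`. -/
def limit : bigOGerm 𝕜 hδ →+* 𝕜 :=
  (RingHom.snd (Germ F 𝕜) 𝕜).comp (bigOGerm 𝕜 hδ).subtype

theorem exists_germ_eq_limit_eq {f : T → 𝕜} {x : 𝕜} (hf : (fun t => x - f t) =O[F] δ) :
    ∃ p : bigOGerm 𝕜 hδ, germ hδ p = f ∧ limit hδ p = x :=
  ⟨⟨(f, x), f, rfl, hf⟩, rfl, rfl⟩

theorem exists_germ_eq (p : bigOGerm 𝕜 hδ) :
    ∃ f : T → 𝕜, germ hδ p = f ∧ (fun t => limit hδ p - f t) =O[F] δ :=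
  let ⟨f, hf, hfO⟩ := p.2
  ⟨f, hf.symm, hfO⟩

instance isLocalHom_limit : IsLocalHom (limit (𝕜 := 𝕜) hδ) where
  map_nonunit p hp := by
    have hx : limit hδ p ≠ 0 := hp.ne_zero
    obtain ⟨f, hf, hfO⟩ := exists_germ_eq hδ p
    obtain ⟨q, hq, hqx⟩ := exists_germ_eq_limit_eq hδ (inv_sub_inv_isBigO hδ hx hfO)
    have hgerm : germ hδ p * germ hδ q = 1 := by
      rw [hf, hq]
      refine Germ.coe_eq.2 ?_
      filter_upwards [(tendsto_of_sub_isBigO hδ hfO).eventually_ne hx] with t ht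
      exact mul_inv_cancel₀ ht
    have hlimit : limit hδ p * limit hδ q = 1 := by rw [hqx, mul_inv_cancel₀ hx]
    exact .of_mul_eq_one q (Subtype.ext (Prod.ext hgerm hlimit))

end bigOGerm

end BigOGerm

section Germ

variable {T R : Type*} [CommRing R] {F : Filter T}

theorem eventually_map_eval_eq_of_map_germ_eq {p q : (T → R)[X]}
    (h : p.map (Germ.coeRingHom F) = q.map (Germ.coeRingHom F)) :
    ∀ᶠ t in F, p.map (Pi.evalRingHom (fun _ => R) t) = q.map (Pi.evalRingHom (fun _ => R) t) := by
  have hcoeff : ∀ᶠ t in F, ∀ i ∈ p.support ∪ q.support, p.coeff i t = q.coeff i t := by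
    refine (Filter.eventually_all_finset _).2 fun i _ => Germ.coe_eq.1 ?_
    simpa only [coeff_map, Germ.coe_coeRingHom] using congrArg (coeff · i) h
  filter_upwards [hcoeff] with t ht
  ext i
  rw [coeff_map, coeff_map]
  by_cases hi : i ∈ p.support ∪ q.support
  · exact ht i hi
  · rw [Finset.mem_union, not_or, notMem_support_iff, notMem_support_iff] at hi
    rw [hi.1, hi.2]

theorem MonicTransmissionEquation.eventually {m : ℕ} {α β αs βs Λ : ℕ → T → R}
    (h : MonicTransmissionEquation m (fun n => (α n : Germ F R)) (fun n => (β n : Germ F R))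
      (fun n => (αs n : Germ F R)) (fun n => (βs n : Germ F R)) (fun j => (Λ j : Germ F R))) :
    ∀ᶠ t in F, MonicTransmissionEquation m (fun n => α n t) (fun n => β n t) (fun n => αs n t)
      (fun n => βs n t) (fun j => Λ j t) := by
  have hmap := eventually_map_eval_eq_of_map_germ_eq (F := F)
    (p := C (α (m + 1)) * monicSolution α β (m + 1) * monicSolution αs βs (m + 2)
      - C (αs (m + 1)) * monicSolution α β (m + 2) * monicSolution αs βs (m + 1))
    (q := C (α (m + 1) - αs (m + 1)) * ∏ j ∈ Finset.Icc 1 (2 * (m + 1) - 1), (X - C (Λ j)))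
    (by simpa [MonicTransmissionEquation, map_monicSolution, Polynomial.map_prod] using h)
  filter_upwards [hmap] with t ht
  simpa [MonicTransmissionEquation, map_monicSolution, Polynomial.map_prod] using ht

end Germ

section Stability

variable {𝕜 : Type*} [NormedField 𝕜] {α β αs βs Λ : ℕ → 𝕜}

theorem exists_monicTransmissionEquation_isBigO {T : Type*} {F : Filter T} {δ : T → ℝ}
    (hδ : Tendsto δ F (𝓝 0)) {m : ℕ} (hα : ∀ n, 1 ≤ n → n ≤ m + 1 → IsUnit (α n))
    (hαs : ∀ n, 1 ≤ n → n ≤ m + 1 → IsUnit (αs n)) (h : MonicTransmissionEquation m α β αs βs Λ)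
    {αs' βs' Λ' : ℕ → T → 𝕜} {a : T → 𝕜}
    (hΛ' : ∀ j, 1 ≤ j → j ≤ 2 * (m + 1) - 1 → (fun t => Λ j - Λ' j t) =O[F] δ)
    (hαs' : ∀ n, 1 ≤ n → n ≤ m + 1 → (fun t => αs n - αs' n t) =O[F] δ)
    (hβs' : ∀ n, 1 ≤ n → n ≤ m + 1 → (fun t => βs n - βs' n t) =O[F] δ)
    (ha : (fun t => α (m + 1) - a t) =O[F] δ) :
    ∃ α' β' : ℕ → T → 𝕜,
      (∀ n, 1 ≤ n → n ≤ m + 1 →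
        (fun t => α n - α' n t) =O[F] δ ∧ (fun t => β n - β' n t) =O[F] δ) ∧
      ∀ᶠ t in F, α' (m + 1) t = a t ∧
        MonicTransmissionEquation m (fun n => α' n t) (fun n => β' n t) (fun n => αs' n t)
          (fun n => βs' n t) (fun j => Λ' j t) := by
  choose! ΛR hΛR using fun j h₁ hj => bigOGerm.exists_germ_eq_limit_eq hδ (hΛ' j h₁ hj)
  choose! αsR hαsR using fun n h₁ hn => bigOGerm.exists_germ_eq_limit_eq hδ (hαs' n h₁ hn)
  choose! βsR hβsR using fun n h₁ hn => bigOGerm.exists_germ_eq_limit_eq hδ (hβs' n h₁ hn)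
  obtain ⟨aR, haR, haR_lim⟩ := bigOGerm.exists_germ_eq_limit_eq hδ ha
  obtain ⟨αR, βR, htop, hR, hlim⟩ := h.exists_lift (bigOGerm.limit hδ) hα hαs haR_lim
    (fun n h₁ hn => ⟨(hαsR n h₁ hn).2, (hβsR n h₁ hn).2⟩) fun j h₁ hj => (hΛR j h₁ hj).2
  choose α' hα' hα'O using fun n => bigOGerm.exists_germ_eq hδ (αR n)
  choose β' hβ' hβ'O using fun n => bigOGerm.exists_germ_eq hδ (βR n)
  refine ⟨α', β', fun n h₁ hn => ⟨(hlim n h₁ hn).1 ▸ hα'O n, (hlim n h₁ hn).2 ▸ hβ'O n⟩, ?_⟩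
  have hgerm := (hR.map (bigOGerm.germ hδ)).congr_right
    (fun n h₁ hn => ⟨(hαsR n h₁ hn).1, (hβsR n h₁ hn).1⟩) fun j h₁ hj => (hΛR j h₁ hj).1
  simp only [hα', hβ'] at hgerm
  have htop' : α' (m + 1) =ᶠ[F] a := by rw [← Germ.coe_eq, ← hα', htop, haR]
  exact htop'.and hgerm.eventually

theorem IsTransmissionSpectrum.exists_isBigO {T : Type*} {F : Filter T} {δ : T → ℝ}
    (hδ : Tendsto δ F (𝓝 0)) {l : ℕ} (h : IsTransmissionSpectrum l α β αs βs Λ)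
    {αs' βs' Λ' : ℕ → T → 𝕜} {a : T → 𝕜}
    (hΛ' : ∀ j, 1 ≤ j → j ≤ 2 * l - 1 → (fun t => Λ j - Λ' j t) =O[F] δ)
    (hαs' : ∀ n, 1 ≤ n → n ≤ l → (fun t => αs n - αs' n t) =O[F] δ)
    (hβs' : ∀ n, 1 ≤ n → n ≤ l → (fun t => βs n - βs' n t) =O[F] δ)
    (ha : (fun t => α l - a t) =O[F] δ) :
    ∃ α' β' : ℕ → T → 𝕜,
      (∀ n, 1 ≤ n → n ≤ l →
        (fun t => α n - α' n t) =O[F] δ ∧ (fun t => β n - β' n t) =O[F] δ) ∧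
      ∀ᶠ t in F, α' l t = a t ∧
        IsTransmissionSpectrum l (fun n => α' n t) (fun n => β' n t) (fun n => αs' n t)
          (fun n => βs' n t) (fun j => Λ' j t) := by
  obtain ⟨m, rfl⟩ := Nat.exists_eq_add_one_of_ne_zero h.pos.ne'
  obtain ⟨hα, hαs, hne, heq⟩ := isTransmissionSpectrum_succ_iff.1 h
  obtain ⟨α', β', hO, hev⟩ :=
    exists_monicTransmissionEquation_isBigO hδ hα hαs heq hΛ' hαs' hβs' ha
  have eventually_isUnit {f : T → 𝕜} {x : 𝕜} (hx : IsUnit x)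
      (hf : (fun t => x - f t) =O[F] δ) : ∀ᶠ t in F, IsUnit (f t) :=
    ((tendsto_of_sub_isBigO hδ hf).eventually_ne hx.ne_zero).mono fun t => IsUnit.mk0 _
  have eventually_isUnit_Icc {x : ℕ → 𝕜} {f : ℕ → T → 𝕜}
      (hx : ∀ n, 1 ≤ n → n ≤ m + 1 → IsUnit (x n))
      (hf : ∀ n, 1 ≤ n → n ≤ m + 1 → (fun t => x n - f n t) =O[F] δ) :
      ∀ᶠ t in F, ∀ n ∈ Finset.Icc 1 (m + 1), IsUnit (f n t) :=
    (Filter.eventually_all_finset _).2 fun n hn =>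
      have ⟨h₁, hn⟩ := Finset.mem_Icc.1 hn
      eventually_isUnit (hx n h₁ hn) (hf n h₁ hn)
  have hne' : ∀ᶠ t in F, IsUnit (a t - αs' (m + 1) t) := eventually_isUnit hne <|
    (ha.sub (hαs' (m + 1) (by lia) le_rfl)).congr_left fun t => sub_sub_sub_comm _ _ _ _
  refine ⟨α', β', hO, ?_⟩
  filter_upwards [hev, eventually_isUnit_Icc hα fun n h₁ hn => (hO n h₁ hn).1,
    eventually_isUnit_Icc hαs hαs', hne'] with t ⟨htop, ht⟩ hαt hαst hnet
  exact ⟨htop, isTransmissionSpectrum_succ_iff.2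
    ⟨fun n h₁ hn => hαt n (Finset.mem_Icc.2 ⟨h₁, hn⟩),
      fun n h₁ hn => hαst n (Finset.mem_Icc.2 ⟨h₁, hn⟩), htop ▸ hnet, ht⟩⟩

/-- Perturbed data `(Λ', αs', βs', αl')` for the inverse problem at distance at most `δ` from the
data `(Λ, αs, βs, α l)`. -/
structure TransmissionPerturbation (l : ℕ) (α αs βs Λ : ℕ → 𝕜) where
  (Λ' αs' βs' : ℕ → 𝕜)
  αl' : 𝕜
  δ : ℝ
  norm_sub_Λ'_le : ∀ j, 1 ≤ j → j ≤ 2 * l - 1 → ‖Λ j - Λ' j‖ ≤ δ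
  norm_sub_αs'_add_norm_sub_βs'_le : ∀ n, 1 ≤ n → n ≤ l → ‖αs n - αs' n‖ + ‖βs n - βs' n‖ ≤ δ
  norm_sub_αl'_le : ‖α l - αl'‖ ≤ δ

theorem exists_uniform_bound {T : Type*} {δ : T → ℝ} {l : ℕ} {α' β' : ℕ → T → 𝕜} {p : T → Prop}
    (hO : ∀ n, 1 ≤ n → n ≤ l → (fun t => α n - α' n t) =O[comap δ (𝓝 0)] δ ∧
      (fun t => β n - β' n t) =O[comap δ (𝓝 0)] δ)
    (hp : ∀ᶠ t in comap δ (𝓝 0), p t) :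
    ∃ ε > 0, ∃ K > 0, ∀ t, |δ t| ≤ ε → p t ∧ ∀ n, 1 ≤ n → n ≤ l →
      ‖α n - α' n t‖ ≤ K * |δ t| ∧ ‖β n - β' n t‖ ≤ K * |δ t| := by
  have hpi : (fun t (n : Finset.Icc 1 l) => (α n - α' n t, β n - β' n t)) =O[comap δ (𝓝 0)] δ :=
    isBigO_pi.2 fun n =>
      have ⟨h₁, hn⟩ := Finset.mem_Icc.1 n.2
      (hO n h₁ hn).1.prod_left (hO n h₁ hn).2
  obtain ⟨K, hK, hbound⟩ := hpi.exists_pos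
  obtain ⟨ε, hε, hball⟩ :=
    (Metric.nhds_basis_closedBall.comap δ).eventually_iff.1 (hp.and hbound.bound)
  refine ⟨ε, hε, K, hK, fun t ht => ?_⟩
  obtain ⟨hpt, hKt⟩ := hball (show δ t ∈ Metric.closedBall 0 ε by simpa using ht)
  refine ⟨hpt, fun n h₁ hn => ?_⟩
  have hn_le := (norm_le_pi_norm _ (⟨n, Finset.mem_Icc.2 ⟨h₁, hn⟩⟩ : Finset.Icc 1 l)).trans hKt
  exact ⟨(norm_fst_le _).trans hn_le, (norm_snd_le _).trans hn_le⟩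

end Stability

theorem transmissionEigenvalues_iff {l : ℕ} {α β αs βs Λ : ℕ → ℂ} :
    TransmissionEigenvalues l α β αs βs Λ ↔ IsTransmissionSpectrum l α β αs βs Λ := by
  simp only [TransmissionEigenvalues, IsTransmissionSpectrum, isUnit_iff_ne_zero]
  constructor
  · rintro ⟨φ, φs, h₀, h₁, hs₀, hs₁, hrec, hrecs, hc⟩
    exact ⟨φ, φs, ⟨h₀, h₁, hrec⟩, ⟨hs₀, hs₁, hrecs⟩, hc⟩
  · rintro ⟨φ, φs, hφ, hφs, hc⟩
    exact ⟨φ, φs, hφ.zero, hφ.one, hφs.zero, hφs.one, hφ.recurrence, hφs.recurrence, hc⟩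

theorem transmission_local_solvability_stability_general {𝕜 : Type*} [NormedField 𝕜] {l : ℕ}
    {α β αs βs Λ : ℕ → 𝕜} (hΛ : IsTransmissionSpectrum l α β αs βs Λ) :
    ∃ ε > (0 : ℝ), ∃ K > (0 : ℝ), ∀ (Λ' αs' βs' : ℕ → 𝕜) (αl' : 𝕜) (δ : ℝ),
      δ ≤ ε →
      (∀ j, 1 ≤ j → j ≤ 2 * l - 1 → ‖Λ j - Λ' j‖ ≤ δ) →
      (∀ n, 1 ≤ n → n ≤ l → ‖αs n - αs' n‖ + ‖βs n - βs' n‖ ≤ δ) →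
      ‖α l - αl'‖ ≤ δ →
      ∃ α' β' : ℕ → 𝕜, α' l = αl' ∧ IsTransmissionSpectrum l α' β' αs' βs' Λ' ∧
        (∀ n, 1 ≤ n → n ≤ l → ‖α n - α' n‖ ≤ K * δ ∧ ‖β n - β' n‖ ≤ K * δ) ∧
        ∀ α'' β'' : ℕ → 𝕜, α'' l = αl' → IsTransmissionSpectrum l α'' β'' αs' βs' Λ' →
          ∀ n, 1 ≤ n → n ≤ l → α'' n = α' n ∧ β'' n = β' n := by
  obtain ⟨α', β', hO, hev⟩ := hΛ.exists_isBigO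
    (tendsto_comap : Tendsto (TransmissionPerturbation.δ (l := l) (α := α) (αs := αs) (βs := βs)
      (Λ := Λ)) _ (𝓝 0))
    (αs' := fun n p => p.αs' n) (βs' := fun n p => p.βs' n) (Λ' := fun j p => p.Λ' j)
    (a := fun p => p.αl') (fun j h₁ hj => .of_norm_le fun p => p.norm_sub_Λ'_le j h₁ hj)
    (fun n h₁ hn => .of_norm_le fun p =>
      (le_add_of_nonneg_right (norm_nonneg _)).trans (p.norm_sub_αs'_add_norm_sub_βs'_le n h₁ hn))
    (fun n h₁ hn => .of_norm_le fun p =>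
      (le_add_of_nonneg_left (norm_nonneg _)).trans (p.norm_sub_αs'_add_norm_sub_βs'_le n h₁ hn))
    (.of_norm_le fun p => p.norm_sub_αl'_le)
  obtain ⟨ε, hε, K, hK, hbound⟩ := exists_uniform_bound hO hev
  refine ⟨ε, hε, K, hK, fun Λ' αs' βs' αl' δ hδ hΛ' hs hαl' => ?_⟩
  have hδ_abs : |δ| = δ := abs_of_nonneg ((norm_nonneg _).trans hαl')
  obtain ⟨⟨htop, hspec⟩, hle⟩ := hbound ⟨Λ', αs', βs', αl', δ, hΛ', hs, hαl'⟩ (hδ_abs.trans_le hδ)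
  rw [hδ_abs] at hle
  exact ⟨_, _, htop, hspec, hle, fun α'' β'' htop'' h'' =>
    h''.unique hspec (htop''.trans htop.symm)⟩

/-- Theorem 3.4: local solvability and stability for the inverse discrete transmission
eigenvalue problem. Small perturbations of the eigenvalues and of the data
`α• n`, `β• n`, `α l` still produce a (unique) solvable inverse transmission problem, and
the recovered coefficients differ from the original ones by at most `C δ`. -/
theorem transmission_local_solvability_stability (l : ℕ) (hl : 1 ≤ l)
    (α β αs βs : ℕ → ℂ)
    (hα : ∀ n, 1 ≤ n → n ≤ l → α n ≠ 0)
    (hαs : ∀ n, 1 ≤ n → n ≤ l → αs n ≠ 0)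
    (hne : α l ≠ αs l)
    (Λ : ℕ → ℂ) (hΛ : TransmissionEigenvalues l α β αs βs Λ) :
    ∃ ε > (0 : ℝ), ∃ Cst > (0 : ℝ),
      ∀ (Λ' αs' βs' : ℕ → ℂ) (αl' : ℂ) (δ : ℝ),
        δ ≤ ε →
        (∀ j, 1 ≤ j → j ≤ 2 * l - 1 → ‖Λ j - Λ' j‖ ≤ δ) →
        (∀ n, 1 ≤ n → n ≤ l →
          ‖αs n - αs' n‖ + ‖βs n - βs' n‖ ≤ δ) →
        ‖α l - αl'‖ ≤ δ →
        ∃ α' β' : ℕ → ℂ,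
          (∀ n, 1 ≤ n → n ≤ l - 1 → α' n ≠ 0) ∧ α' l = αl' ∧
          TransmissionEigenvalues l α' β' αs' βs' Λ' ∧
          (∀ n, 1 ≤ n → n ≤ l →
            ‖α n - α' n‖ ≤ Cst * δ ∧ ‖β n - β' n‖ ≤ Cst * δ) ∧
          (∀ α'' β'' : ℕ → ℂ,
            (∀ n, 1 ≤ n → n ≤ l - 1 → α'' n ≠ 0) → α'' l = αl' →
            TransmissionEigenvalues l α'' β'' αs' βs' Λ' →
            (∀ n, 1 ≤ n → n ≤ l - 1 → α'' n = α' n) ∧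
            (∀ n, 1 ≤ n → n ≤ l → β'' n = β' n)) := by
  obtain ⟨ε, hε, K, hK, hstable⟩ :=
    transmission_local_solvability_stability_general (transmissionEigenvalues_iff.1 hΛ)
  refine ⟨ε, hε, K, hK, fun Λ' αs' βs' αl' δ hδ hΛ' hs hαl' => ?_⟩
  obtain ⟨α', β', htop, hspec, hbound, huniq⟩ := hstable Λ' αs' βs' αl' δ hδ hΛ' hs hαl'
  refine ⟨α', β', fun n h₁ hn => hspec.ne_zero h₁ (by lia), htop,
    transmissionEigenvalues_iff.2 hspec, hbound, fun α'' β'' _ htop'' h'' => ?_⟩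
  have huniq' := huniq α'' β'' htop'' (transmissionEigenvalues_iff.1 h'')
  exact ⟨fun n h₁ hn => (huniq' n h₁ (by lia)).1, fun n h₁ hn => (huniq' n h₁ hn).2⟩
end
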